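/- arXiv:math/0503174 — 8 statements merged into one kernel-verified Lean document; each statement's English description precedes it below -/
import Mathlib

section
/- Let $n \ge 1$ and let $X$ be a symmetric positive semidefinite $2n \times 2n$ real matrix written in block form $X = \begin{pmatrix} U & Y \\ Y^\top & V \end{pmatrix}$ with $n \times n$ blocks, where $U$, $V$ and $Y$ have no negative entries. Let $D$ be the diagonal $2n \times 2n$ matrix whose $i$-th diagonal entry is the $i$-th row sum of $X$, and let $X_- = \begin{pmatrix} U & -Y \\ -Y^\top & V \end{pmatrix}$. Then $D - X_-$ is positive semidefinite. -/
open Matrix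

/-!
Let `D` be the diagonal matrix of row sums of a symmetric matrix `W`. Symmetrising the diagonal part
`∑ i, ∑ j, W i j * x i ^ 2` in `i` and `j` writes `2 xᵀ(D - M)x` as the sum over all pairs of
`W i j * (x i ^ 2 + x j ^ 2) - 2 * (M i j * (x i * x j))`, and each of these is nonnegative by AM-GM
as soon as `|M i j| ≤ W i j`. This covers every `M` obtained from an entrywise nonnegative `W` by
changing the signs of some entries.
-/

section QuadraticForm

variable {ι R : Type*} [Fintype ι] [DecidableEq ι]

theorem dotProduct_diagonal_rowSum_mulVec [CommSemiring R] (W : Matrix ι ι R) (x : ι → R) :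
    x ⬝ᵥ diagonal (fun i => ∑ j, W i j) *ᵥ x = ∑ i, ∑ j, W i j * x i ^ 2 := by
  simp only [dotProduct, mulVec_diagonal, Finset.sum_mul, Finset.mul_sum]
  exact Finset.sum_congr rfl fun i _ => Finset.sum_congr rfl fun j _ => by ring

theorem two_mul_dotProduct_diagonal_rowSum_sub_mulVec [CommRing R] {W : Matrix ι ι R}
    (hW : W.IsSymm) (M : Matrix ι ι R) (x : ι → R) :
    2 * (x ⬝ᵥ (diagonal (fun i => ∑ j, W i j) - M) *ᵥ x) =
      ∑ i, ∑ j, (W i j * (x i ^ 2 + x j ^ 2) - 2 * (M i j * (x i * x j))) := by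
  have swap : ∑ i, ∑ j, W i j * x j ^ 2 = ∑ i, ∑ j, W i j * x i ^ 2 := by
    rw [Finset.sum_comm]
    simp only [hW.apply]
  have form : x ⬝ᵥ M *ᵥ x = ∑ i, ∑ j, M i j * (x i * x j) := by
    simp only [dotProduct, mulVec, Finset.mul_sum]
    exact Finset.sum_congr rfl fun i _ => Finset.sum_congr rfl fun j _ => by ring
  simp only [mul_add, Finset.sum_sub_distrib, Finset.sum_add_distrib, ← Finset.mul_sum, swap]
  rw [sub_mulVec, dotProduct_sub, dotProduct_diagonal_rowSum_mulVec, form]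
  ring

end QuadraticForm

theorem abs_fromBlocks_neg_neg_eq_fromBlocks {l m n o R : Type*} [AddCommGroup R] [Lattice R]
    [IsOrderedAddMonoid R] {A : Matrix n l R} {B : Matrix n m R} {C : Matrix o l R}
    {D : Matrix o m R} (hA : ∀ i j, 0 ≤ A i j) (hB : ∀ i j, 0 ≤ B i j) (hC : ∀ i j, 0 ≤ C i j)
    (hD : ∀ i j, 0 ≤ D i j) (i : n ⊕ o) (j : l ⊕ m) :
    |fromBlocks A (-B) (-C) D i j| = fromBlocks A B C D i j := by
  rcases i with i | i <;> rcases j with j | j <;> simp [abs_of_nonneg, hA, hB, hC, hD]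

section Order

variable {R : Type*} [CommRing R] [LinearOrder R] [IsStrictOrderedRing R]

theorem two_mul_mul_le_mul_sq_add_sq_of_abs_le {m w : R} (h : |m| ≤ w) (a b : R) :
    2 * (m * (a * b)) ≤ w * (a ^ 2 + b ^ 2) :=
  calc 2 * (m * (a * b))
    _ ≤ |2 * (m * (a * b))| := le_abs_self _
    _ = |m| * (2 * |a| * |b|) := by rw [abs_mul, abs_mul, abs_mul, abs_two]; ring
    _ ≤ |m| * (|a| ^ 2 + |b| ^ 2) := by gcongr; exact two_mul_le_add_sq _ _
    _ ≤ w * (a ^ 2 + b ^ 2) := by rw [sq_abs, sq_abs]; gcongr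

theorem dotProduct_diagonal_rowSum_sub_mulVec_nonneg {ι : Type*} [Fintype ι] [DecidableEq ι]
    {W M : Matrix ι ι R} (hW : W.IsSymm) (hM : ∀ i j, |M i j| ≤ W i j) (x : ι → R) :
    0 ≤ x ⬝ᵥ (diagonal (fun i => ∑ j, W i j) - M) *ᵥ x := by
  refine nonneg_of_mul_nonneg_right ?_ (zero_lt_two' R)
  rw [two_mul_dotProduct_diagonal_rowSum_sub_mulVec hW]
  exact Finset.sum_nonneg fun i _ => Finset.sum_nonneg fun j _ =>
    sub_nonneg.mpr (two_mul_mul_le_mul_sq_add_sq_of_abs_le (hM i j) (x i) (x j))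

theorem stmt_1_general {m n : Type*} [Fintype m] [Fintype n] [DecidableEq m] [DecidableEq n]
    {U : Matrix m m R} {Y : Matrix m n R} {V : Matrix n n R}
    (hsym : (fromBlocks U Y Yᵀ V).IsSymm) (hU : ∀ i j, 0 ≤ U i j) (hY : ∀ i j, 0 ≤ Y i j)
    (hV : ∀ i j, 0 ≤ V i j) (x : m ⊕ n → R) :
    0 ≤ x ⬝ᵥ (diagonal (fun i => ∑ j, fromBlocks U Y Yᵀ V i j)
      - fromBlocks U (-Y) (-Yᵀ) V) *ᵥ x :=
  dotProduct_diagonal_rowSum_sub_mulVec_nonneg hsym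
    (fun i j => (abs_fromBlocks_neg_neg_eq_fromBlocks hU hY (fun i j => hY j i) hV i j).le) x

end Order

/-- Lemma 1(b): with `X = [[U, Y], [Yᵀ, V]]` symmetric PSD with nonnegative blocks,
`D` the diagonal matrix of row sums of `X`, and `X₋ = [[U, -Y], [-Yᵀ, V]]`,
the matrix `D - X₋` is positive semidefinite. -/
theorem stmt_1 (n : ℕ) (hn : 1 ≤ n) (U Y V : Matrix (Fin n) (Fin n) ℝ)
    (hsym : (fromBlocks U Y Yᵀ V)ᵀ = fromBlocks U Y Yᵀ V)
    (hpsd : ∀ x : Fin n ⊕ Fin n → ℝ, 0 ≤ x ⬝ᵥ (fromBlocks U Y Yᵀ V) *ᵥ x)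
    (hU : ∀ i j, 0 ≤ U i j) (hY : ∀ i j, 0 ≤ Y i j) (hV : ∀ i j, 0 ≤ V i j) :
    ∀ x : Fin n ⊕ Fin n → ℝ,
      0 ≤ x ⬝ᵥ (Matrix.diagonal (fun i => ∑ j, fromBlocks U Y Yᵀ V i j)
                  - fromBlocks U (-Y) (-Yᵀ) V) *ᵥ x :=
  stmt_1_general hsym hU hY hV
end

section
/- Let $C$ be a symmetric $n \times n$ real matrix and $c \in \mathbb{R}^n$. Let $Q_{C,c}$ be the $2n \times 2n$ block matrix $\begin{pmatrix} C + ec^\top + ce^\top & -C + ce^\top - ec^\top \\ -C + ec^\top - ce^\top & C - ec^\top - ce^\top \end{pmatrix}$, where $e \in \mathbb{R}^n$ is the all-ones vector. Then $\min\{ y^\top C y + 2 c^\top y : y \in \mathbb{R}^n,\ \|y\|_1 \le 1 \} = \min\{ x^\top Q_{C,c}\, x : x \in \Delta^{2n} \}$; in particular both minima are attained and equal. -/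
open Matrix

/-!
Write a point of `Δ²ⁿ` as `x = (u, v)` and put `y = u - v`. The matrix `Q_{C,c}` is chosen so that
`xᵀ Q x = yᵀ C y + 2 (eᵀ x) (cᵀ y)`: the factor `eᵀ x`, which is `1` on the simplex, homogenizes the
linear term. Since `(u, v) ↦ u - v` maps the simplex onto the `ℓ¹`-ball, both problems have the same
set of values, and the minimum exists because the simplex is compact.
-/

variable {ι R 𝕜 : Type*} [Fintype ι]

/-- The matrix `Q_{C,c}` of the paper, whose quadratic form on the simplex represents the function
`y ↦ yᵀ C y + 2 cᵀ y` on the `ℓ¹`-ball. The left and right summands of `ι ⊕ ι` index the parts `u`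
and `v` of `y = u - v`. -/
def homogenizedMatrix [CommRing R] (C : Matrix ι ι R) (c : ι → R) : Matrix (ι ⊕ ι) (ι ⊕ ι) R :=
  fromBlocks
    (C + vecMulVec 1 c + vecMulVec c 1) (-C + vecMulVec c 1 - vecMulVec 1 c)
    (-C + vecMulVec 1 c - vecMulVec c 1) (C - vecMulVec 1 c - vecMulVec c 1)

theorem dotProduct_homogenizedMatrix_mulVec [CommRing R] (C : Matrix ι ι R) (c : ι → R)
    (x : ι ⊕ ι → R) :
    x ⬝ᵥ homogenizedMatrix C c *ᵥ x =
      (x ∘ Sum.inl - x ∘ Sum.inr) ⬝ᵥ C *ᵥ (x ∘ Sum.inl - x ∘ Sum.inr) +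
        2 * ((∑ i, x i) * (c ⬝ᵥ (x ∘ Sum.inl - x ∘ Sum.inr))) := by
  obtain ⟨u, v, rfl⟩ : ∃ u v, x = Sum.elim u v := ⟨_, _, (Sum.elim_comp_inl_inr x).symm⟩
  have sum_eq : ∑ i, Sum.elim u v i = u ⬝ᵥ 1 + v ⬝ᵥ 1 := by
    simp [dotProduct_one]
  rw [sum_eq, homogenizedMatrix, fromBlocks_mulVec, sumElim_dotProduct_sumElim]
  simp only [Sum.elim_comp_inl, Sum.elim_comp_inr, add_mulVec, sub_mulVec, neg_mulVec,
    vecMulVec_mulVec, mulVec_sub, dotProduct_add, dotProduct_sub, dotProduct_neg, sub_dotProduct,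
    op_smul_eq_smul, dotProduct_smul, smul_eq_mul, dotProduct_comm 1, dotProduct_comm _ c]
  ring

theorem sum_abs_inl_sub_inr_le_sum [AddCommGroup R] [LinearOrder R] [IsOrderedAddMonoid R]
    {x : ι ⊕ ι → R} (hx : 0 ≤ x) :
    ∑ i, |(x ∘ Sum.inl - x ∘ Sum.inr) i| ≤ ∑ i, x i := by
  rw [Fintype.sum_sum_type, ← Finset.sum_add_distrib]
  refine Finset.sum_le_sum fun i _ ↦ ?_
  calc |x (.inl i) - x (.inr i)| ≤ |x (.inl i)| + |x (.inr i)| := abs_sub _ _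
    _ = x (.inl i) + x (.inr i) := by rw [abs_of_nonneg (hx _), abs_of_nonneg (hx _)]

section OrderedField

variable [Field 𝕜] [LinearOrder 𝕜] [IsStrictOrderedRing 𝕜] [Nonempty ι]

theorem exists_mem_stdSimplex_inl_sub_inr_eq {y : ι → 𝕜} (hy : ∑ i, |y i| ≤ 1) :
    ∃ x ∈ stdSimplex 𝕜 (ι ⊕ ι), x ∘ Sum.inl - x ∘ Sum.inr = y := by
  -- Adding the same `d` to the positive and the negative part keeps their difference; this value
  -- of `d` uses up the slack `1 - ‖y‖₁`.
  let d : 𝕜 := (1 - ∑ i, |y i|) / (2 * Fintype.card ι)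
  have d_nonneg : 0 ≤ d := div_nonneg (sub_nonneg.2 hy) (by positivity)
  refine ⟨Sum.elim (fun i ↦ (y i)⁺ + d) (fun i ↦ (y i)⁻ + d), ⟨?_, ?_⟩, ?_⟩
  · rintro (i | i)
    · exact add_nonneg (posPart_nonneg _) d_nonneg
    · exact add_nonneg (negPart_nonneg _) d_nonneg
  · have card_ne_zero : (Fintype.card ι : 𝕜) ≠ 0 := Nat.cast_ne_zero.2 Fintype.card_ne_zero
    calc ∑ i, Sum.elim (fun i ↦ (y i)⁺ + d) (fun i ↦ (y i)⁻ + d) i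
        = ∑ i, (|y i| + 2 * d) := by
          rw [Fintype.sum_sum_type, ← Finset.sum_add_distrib]
          refine Finset.sum_congr rfl fun i _ ↦ ?_
          rw [← posPart_add_negPart, Sum.elim_inl, Sum.elim_inr]
          ring
      _ = ∑ i, |y i| + Fintype.card ι * (2 * d) := by
          rw [Finset.sum_add_distrib, Finset.sum_const, Finset.card_univ, nsmul_eq_mul]
      _ = 1 := by
          simp only [d]
          field_simp
          ring
  · ext i
    simp [posPart_sub_negPart]

theorem image_inl_sub_inr_stdSimplex_eq_l1Ball :
    (fun x : ι ⊕ ι → 𝕜 ↦ x ∘ Sum.inl - x ∘ Sum.inr) '' stdSimplex 𝕜 (ι ⊕ ι) =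
      {y | ∑ i, |y i| ≤ 1} := by
  refine Set.Subset.antisymm ?_ fun y hy ↦ exists_mem_stdSimplex_inl_sub_inr_eq hy
  rintro _ ⟨x, hx, rfl⟩
  exact (sum_abs_inl_sub_inr_le_sum hx.1).trans_eq hx.2

theorem image_stdSimplex_homogenizedMatrix_eq_image_l1Ball (C : Matrix ι ι 𝕜) (c : ι → 𝕜) :
    (fun x ↦ x ⬝ᵥ homogenizedMatrix C c *ᵥ x) '' stdSimplex 𝕜 (ι ⊕ ι) =
      (fun y ↦ y ⬝ᵥ C *ᵥ y + 2 * (c ⬝ᵥ y)) '' {y | ∑ i, |y i| ≤ 1} := by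
  rw [← image_inl_sub_inr_stdSimplex_eq_l1Ball, Set.image_image]
  refine Set.image_congr fun x hx ↦ ?_
  rw [dotProduct_homogenizedMatrix_mulVec, hx.2, one_mul]

end OrderedField

theorem exists_isLeast_image_stdSimplex [Nonempty ι] {α : Type*} [LinearOrder α]
    [TopologicalSpace α] [ClosedIicTopology α] {f : (ι → ℝ) → α}
    (hf : ContinuousOn f (stdSimplex ℝ ι)) : ∃ a, IsLeast (f '' stdSimplex ℝ ι) a :=
  ((isCompact_stdSimplex ℝ ι).image_of_continuousOn hf).exists_isLeast
    (Set.Nonempty.image f Set.Nonempty.of_subtype)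

theorem stmt_4_general [Nonempty ι] (C : Matrix ι ι ℝ) (c : ι → ℝ) :
    ∃ α : ℝ,
      IsLeast ((fun y ↦ y ⬝ᵥ C *ᵥ y + 2 * (c ⬝ᵥ y)) '' {y | ∑ i, |y i| ≤ 1}) α ∧
      IsLeast ((fun x ↦ x ⬝ᵥ homogenizedMatrix C c *ᵥ x) '' stdSimplex ℝ (ι ⊕ ι)) α := by
  have form_continuous : Continuous fun x ↦ x ⬝ᵥ homogenizedMatrix C c *ᵥ x := by fun_prop
  obtain ⟨α, hα⟩ := exists_isLeast_image_stdSimplex form_continuous.continuousOn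
  exact ⟨α, image_stdSimplex_homogenizedMatrix_eq_image_l1Ball C c ▸ hα, hα⟩

/-- Reformulation of the quadratic problem over the ℓ¹-ball as a standard quadratic
optimization problem over the simplex Δ^{2n}:
`min { yᵀCy + 2cᵀy : ‖y‖₁ ≤ 1 } = min { xᵀ Q_{C,c} x : x ∈ Δ^{2n} }`,
with both minima attained. -/
theorem stmt_4 (n : ℕ) (hn : 0 < n) (C : Matrix (Fin n) (Fin n) ℝ) (hC : Cᵀ = C)
    (c : Fin n → ℝ) :
    ∃ α : ℝ,
      IsLeast {r : ℝ | ∃ y : Fin n → ℝ, (∑ i, |y i|) ≤ 1 ∧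
          r = y ⬝ᵥ C *ᵥ y + 2 * (c ⬝ᵥ y)} α ∧
      IsLeast {r : ℝ | ∃ x : Fin n ⊕ Fin n → ℝ, (∀ i, 0 ≤ x i) ∧ (∑ i, x i) = 1 ∧
          r = x ⬝ᵥ (fromBlocks
              (C + vecMulVec (1 : Fin n → ℝ) c + vecMulVec c (1 : Fin n → ℝ))
              (-C + vecMulVec c (1 : Fin n → ℝ) - vecMulVec (1 : Fin n → ℝ) c)
              (-C + vecMulVec (1 : Fin n → ℝ) c - vecMulVec c (1 : Fin n → ℝ))
              (C - vecMulVec (1 : Fin n → ℝ) c - vecMulVec c (1 : Fin n → ℝ))) *ᵥ x} α := by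
  have : Nonempty (Fin n) := Fin.pos_iff_nonempty.1 hn
  simpa only [Set.image, stdSimplex, Set.mem_ofPred_eq, and_assoc, eq_comm (b := _ ⬝ᵥ _),
    eq_comm (b := _ + _), homogenizedMatrix] using stmt_4_general C c
end

section
/- Let $n \ge 1$, let $C$ be a symmetric $n \times n$ real matrix, and let $X = \begin{pmatrix} U & Y \\ Y^\top & V \end{pmatrix}$ be a symmetric positive semidefinite $2n \times 2n$ matrix with $n \times n$ blocks, all of whose entries are nonnegative, and with $\sum_{i,j} X_{ij} = 1$. Set $W = U - Y - Y^\top + V$ and $u = (U + Y + Y^\top + V)e$, where $e \in \mathbb{R}^n$ is the all-ones vector. Then: (i) $W$ is positive semidefinite; (ii) $u_i \ge 0$ for all $i$ and $\sum_i u_i = 1$; (iii) $\operatorname{Diag}(u) - W$ is positive semidefinite; and (iv) $C \bullet W = Q_C \bullet X$, where $Q_C = \begin{pmatrix} C & -C \\ -C & C \end{pmatrix}$. -/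
open Matrix

/-!
With `X = fromBlocks U Y Yᵀ V` and `K = [I, -I]` one has `W = K X Kᵀ` and `Q_C = Kᵀ C K`. So `W` is
positive semidefinite because `X` is, and `C • W = Q_C • X` says that `C ↦ Kᵀ C K` is adjoint to
`X ↦ K X Kᵀ`. Let `S = U + Y + Yᵀ + V`, so that `u` is the vector of row sums of `S`. Since `X` is
nonnegative, `|W| ≤ S` entrywise, and as `S` is symmetric,
`2 xᵀ Diag(u) x = ∑ S i j (x i ^ 2 + x j ^ 2) ≥ ∑ 2 W i j (x i x j) = 2 xᵀ W x`.
-/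

section Congruence

variable {m n R : Type*} [Fintype m] [Fintype n] [CommSemiring R]

theorem dotProduct_congruence_mulVec (K : Matrix m n R) (M : Matrix n n R) (x : m → R) :
    x ⬝ᵥ (K * M * Kᵀ) *ᵥ x = (x ᵥ* K) ⬝ᵥ M *ᵥ (x ᵥ* K) := by
  rw [← mulVec_mulVec, ← mulVec_mulVec, mulVec_transpose, dotProduct_mulVec]

theorem sum_sum_mul_congruence (K : Matrix m n R) (C : Matrix m m R) (M : Matrix n n R) :
    ∑ i, ∑ j, C i j * (K * M * Kᵀ) i j = ∑ i, ∑ j, (Kᵀ * C * K) i j * M i j := by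
  calc ∑ i, ∑ j, C i j * (K * M * Kᵀ) i j
      = trace (C * (K * M * Kᵀ)ᵀ) := sum_hadamard_eq _ _
    _ = trace (C * K * Mᵀ * Kᵀ) := by
      simp only [transpose_mul, transpose_transpose, Matrix.mul_assoc]
    _ = trace (Kᵀ * C * K * Mᵀ) := by
      rw [trace_mul_comm]; simp only [Matrix.mul_assoc]
    _ = ∑ i, ∑ j, (Kᵀ * C * K) i j * M i j := (sum_hadamard_eq _ _).symm

end Congruence

section Blocks

/-- The matrix `[I, -I]`, which sends a vector `(y, z)` to `y - z`; congruence by it turns `X` into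
`W`. -/
def blockDifference (ι R : Type*) [DecidableEq ι] [Ring R] : Matrix ι (ι ⊕ ι) R :=
  fromCols 1 (-1)

variable {ι R : Type*}

theorem blockDifference_mul_fromBlocks_mul_transpose [Fintype ι] [DecidableEq ι] [Ring R]
    (A B C D : Matrix ι ι R) :
    blockDifference ι R * fromBlocks A B C D * (blockDifference ι R)ᵀ = A - B - C + D := by
  rw [blockDifference, transpose_fromCols, fromCols_mul_fromBlocks, fromCols_mul_fromRows]
  simp only [transpose_one, transpose_neg, Matrix.one_mul, Matrix.mul_one, Matrix.neg_mul,
    Matrix.mul_neg]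
  abel

theorem transpose_blockDifference_mul_mul [Fintype ι] [DecidableEq ι] [Ring R]
    (C : Matrix ι ι R) :
    (blockDifference ι R)ᵀ * C * blockDifference ι R = fromBlocks C (-C) (-C) C := by
  rw [blockDifference, transpose_fromCols, fromRows_mul, fromRows_mul_fromCols]
  simp only [transpose_one, transpose_neg, Matrix.one_mul, Matrix.mul_one, Matrix.neg_mul,
    Matrix.mul_neg, neg_neg]

theorem sum_sum_fromBlocks {m n : Type*} [Fintype m] [Fintype n] [AddCommMonoid R]
    (A B C D : Matrix m n R) :
    ∑ i, ∑ j, fromBlocks A B C D i j = ∑ i, ∑ j, (A + B + C + D) i j := by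
  simp only [Fintype.sum_sum_type, fromBlocks_apply₁₁, fromBlocks_apply₁₂, fromBlocks_apply₂₁,
    fromBlocks_apply₂₂, Matrix.add_apply, Finset.sum_add_distrib]
  abel

theorem abs_sub_sub_add_apply_le_of_fromBlocks_nonneg {m n : Type*} [AddCommGroup R]
    [LinearOrder R] [IsOrderedAddMonoid R] {A B C D : Matrix m n R}
    (h : ∀ i j, 0 ≤ fromBlocks A B C D i j) (i : m) (j : n) :
    |(A - B - C + D) i j| ≤ (A + B + C + D) i j := by
  have hA : |A i j| = A i j := abs_of_nonneg (h (.inl i) (.inl j))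
  have hB : |B i j| = B i j := abs_of_nonneg (h (.inl i) (.inr j))
  have hC : |C i j| = C i j := abs_of_nonneg (h (.inr i) (.inl j))
  have hD : |D i j| = D i j := abs_of_nonneg (h (.inr i) (.inr j))
  calc |A i j - B i j - C i j + D i j|
      ≤ |A i j - B i j - C i j| + |D i j| := abs_add_le _ _
    _ ≤ |A i j - B i j| + |C i j| + |D i j| := by gcongr; exact abs_sub _ _
    _ ≤ |A i j| + |B i j| + |C i j| + |D i j| := by gcongr; exact abs_sub _ _
    _ = A i j + B i j + C i j + D i j := by rw [hA, hB, hC, hD]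

end Blocks

section RowSums

variable {ι R : Type*} [Fintype ι]

theorem mulVec_one_apply_eq_sum {m : Type*} [NonAssocSemiring R] (S : Matrix m ι R) (i : m) :
    (S *ᵥ 1) i = ∑ j, S i j :=
  dotProduct_one (S i)

theorem two_mul_dotProduct_diagonal_mulVec_one_mulVec [DecidableEq ι] [CommSemiring R]
    {S : Matrix ι ι R} (hS : S.IsSymm) (x : ι → R) :
    2 * (x ⬝ᵥ diagonal (S *ᵥ 1) *ᵥ x) = ∑ i, ∑ j, S i j * (x i ^ 2 + x j ^ 2) := by
  have row_form : x ⬝ᵥ diagonal (S *ᵥ 1) *ᵥ x = ∑ i, ∑ j, S i j * x i ^ 2 := by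
    refine Finset.sum_congr rfl fun i _ => ?_
    rw [mulVec_diagonal, mulVec_one_apply_eq_sum, ← Finset.sum_mul]
    ring
  have column_form : ∑ i, ∑ j, S i j * x i ^ 2 = ∑ i, ∑ j, S i j * x j ^ 2 := by
    rw [Finset.sum_comm]
    simp only [hS.apply]
  simp only [mul_add, Finset.sum_add_distrib]
  rw [← column_form, ← row_form, two_mul]

variable [CommRing R] [LinearOrder R] [IsStrictOrderedRing R]

theorem two_mul_mul_mul_le_of_abs_le {w s : R} (h : |w| ≤ s) (a b : R) :
    2 * (w * (a * b)) ≤ s * (a ^ 2 + b ^ 2) :=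
  calc 2 * (w * (a * b)) = w * (2 * a * b) := by ring
    _ ≤ |w| * (2 * |a| * |b|) := by
      simpa only [abs_mul, abs_two] using le_abs_self (w * (2 * a * b))
    _ ≤ |w| * (a ^ 2 + b ^ 2) := by
      gcongr
      simpa only [sq_abs] using two_mul_le_add_sq |a| |b|
    _ ≤ s * (a ^ 2 + b ^ 2) := by gcongr

theorem dotProduct_diagonal_mulVec_one_sub_mulVec_nonneg [DecidableEq ι]
    {S W : Matrix ι ι R} (hS : S.IsSymm) (hW : ∀ i j, |W i j| ≤ S i j) (x : ι → R) :
    0 ≤ x ⬝ᵥ (diagonal (S *ᵥ 1) - W) *ᵥ x := by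
  rw [sub_mulVec, dotProduct_sub, sub_nonneg]
  refine le_of_mul_le_mul_left ?_ (zero_lt_two (α := R))
  calc 2 * (x ⬝ᵥ W *ᵥ x) = ∑ i, ∑ j, 2 * (W i j * (x i * x j)) := by
        simp only [dotProduct, mulVec, Finset.mul_sum, mul_left_comm]
    _ ≤ ∑ i, ∑ j, S i j * (x i ^ 2 + x j ^ 2) :=
        Finset.sum_le_sum fun i _ => Finset.sum_le_sum fun j _ =>
          two_mul_mul_mul_le_of_abs_le (hW i j) (x i) (x j)
    _ = 2 * (x ⬝ᵥ diagonal (S *ᵥ 1) *ᵥ x) :=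
        (two_mul_dotProduct_diagonal_mulVec_one_mulVec hS x).symm

end RowSums

theorem stmt_6_general {ι R : Type*} [Fintype ι] [DecidableEq ι] [CommRing R] [LinearOrder R]
    [IsStrictOrderedRing R] (C U Y V : Matrix ι ι R)
    (hsym : (fromBlocks U Y Yᵀ V).IsSymm)
    (hpsd : ∀ x : ι ⊕ ι → R, 0 ≤ x ⬝ᵥ fromBlocks U Y Yᵀ V *ᵥ x)
    (hnn : ∀ i j, 0 ≤ fromBlocks U Y Yᵀ V i j)
    (hsum : ∑ i, ∑ j, fromBlocks U Y Yᵀ V i j = 1) :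
    (∀ x : ι → R, 0 ≤ x ⬝ᵥ (U - Y - Yᵀ + V) *ᵥ x) ∧
    ((∀ i, 0 ≤ ((U + Y + Yᵀ + V) *ᵥ 1) i) ∧ ∑ i, ((U + Y + Yᵀ + V) *ᵥ 1) i = 1) ∧
    (∀ x : ι → R, 0 ≤ x ⬝ᵥ (diagonal ((U + Y + Yᵀ + V) *ᵥ 1) - (U - Y - Yᵀ + V)) *ᵥ x) ∧
    ∑ i, ∑ j, C i j * (U - Y - Yᵀ + V) i j =
      ∑ i, ∑ j, fromBlocks C (-C) (-C) C i j * fromBlocks U Y Yᵀ V i j := by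
  have hW := blockDifference_mul_fromBlocks_mul_transpose U Y Yᵀ V
  have abs_W_le := abs_sub_sub_add_apply_le_of_fromBlocks_nonneg hnn
  have S_symm : (U + Y + Yᵀ + V).IsSymm := by
    obtain ⟨hU, -, -, hV⟩ := isSymm_fromBlocks_iff.mp hsym
    simpa only [add_assoc] using (hU.add (isSymm_add_transpose_self Y)).add hV
  refine ⟨fun x => ?_, ⟨fun i => ?_, ?_⟩,
    dotProduct_diagonal_mulVec_one_sub_mulVec_nonneg S_symm abs_W_le, ?_⟩
  · rw [← hW, dotProduct_congruence_mulVec]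
    exact hpsd _
  · rw [mulVec_one_apply_eq_sum]
    exact Finset.sum_nonneg fun j _ => (abs_nonneg _).trans (abs_W_le i j)
  · simpa only [mulVec_one_apply_eq_sum, sum_sum_fromBlocks] using hsum
  · rw [← hW, sum_sum_mul_congruence, transpose_blockDifference_mul_mul]

/-- Key construction in the proof of Theorem 1: from a feasible `X = [[U, Y], [Yᵀ, V]]`
for the copositive relaxation, `W = U - Y - Yᵀ + V` and `u = (U + Y + Yᵀ + V)e`
are feasible for Nesterov's relaxation, with `C • W = Q_C • X`. -/
theorem stmt_6 (n : ℕ) (hn : 1 ≤ n) (C : Matrix (Fin n) (Fin n) ℝ) (hC : Cᵀ = C)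
    (U Y V : Matrix (Fin n) (Fin n) ℝ)
    (hsym : (fromBlocks U Y Yᵀ V)ᵀ = fromBlocks U Y Yᵀ V)
    (hpsd : ∀ x : Fin n ⊕ Fin n → ℝ, 0 ≤ x ⬝ᵥ (fromBlocks U Y Yᵀ V) *ᵥ x)
    (hnn : ∀ i j, 0 ≤ fromBlocks U Y Yᵀ V i j)
    (hsum : (∑ i : Fin n ⊕ Fin n, ∑ j : Fin n ⊕ Fin n, fromBlocks U Y Yᵀ V i j) = 1) :
    (∀ x : Fin n → ℝ, 0 ≤ x ⬝ᵥ (U - Y - Yᵀ + V) *ᵥ x) ∧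
    ((∀ i, 0 ≤ ((U + Y + Yᵀ + V) *ᵥ (fun _ => (1 : ℝ))) i) ∧
      (∑ i, ((U + Y + Yᵀ + V) *ᵥ (fun _ => (1 : ℝ))) i) = 1) ∧
    (∀ x : Fin n → ℝ,
      0 ≤ x ⬝ᵥ (Matrix.diagonal ((U + Y + Yᵀ + V) *ᵥ (fun _ => (1 : ℝ)))
                  - (U - Y - Yᵀ + V)) *ᵥ x) ∧
    (∑ i, ∑ j, C i j * (U - Y - Yᵀ + V) i j) =
      ∑ i : Fin n ⊕ Fin n, ∑ j : Fin n ⊕ Fin n,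
        fromBlocks C (-C) (-C) C i j * fromBlocks U Y Yᵀ V i j :=
  stmt_6_general C U Y V hsym hpsd hnn hsum
end

section
/- For the symmetric $3 \times 3$ matrix $C = \begin{pmatrix} -1 & 1 & -1 \\ 1 & -1 & -1 \\ -1 & -1 & -1 \end{pmatrix}$, the strict inequality $\alpha_C^{\mathrm{Nest}} < \alpha_{Q_C}^{\mathrm{cop}}$ holds; in fact $\alpha_C^{\mathrm{Nest}} = -4/3$ and $\alpha_{Q_C}^{\mathrm{cop}} = -1 = \min\{ y^\top C y : \|y\|_1 \le 1 \}$. -/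
open Matrix

/-!
For a vector `v` of signs in dimension `n`, take `C = v vᵀ - 2 I`, whose entries are all `± 1` and
whose diagonal is `-1`. For the doubly nonnegative relaxation only the smallest entry of the
objective matters, so its value is `-1`, which is also the minimum over the `ℓ¹` ball. Nesterov's
relaxation goes lower when `n ≥ 3`: with `P` the orthogonal projection onto `v⊥`, the matrix
`P / n` is feasible and gives `2 / n - 2`. This is optimal because `2 P` is a dual certificate:
it is positive semidefinite with diagonal `2 - 2 / n`, and `C + 2 P = (1 - 2 / n) v vᵀ` is
positive semidefinite.
The given matrix is the case `v = (1, 1, -1)`.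
-/

variable {ι : Type*}

theorem neg_le_fromBlocks_neg_apply {κ : Type*} {C : Matrix ι κ ℝ} {c : ℝ}
    (hC : ∀ i j, |C i j| ≤ c) (i : ι ⊕ ι) (j : κ ⊕ κ) : -c ≤ fromBlocks C (-C) (-C) C i j := by
  rcases i with i | i <;> rcases j with j | j <;>
    simp [neg_le_of_abs_le (hC i j), le_of_abs_le (hC i j)]

section PosSemidef

theorem posSemidef_vecMulVec_self [Finite ι] (v : ι → ℝ) : (vecMulVec v v).PosSemidef :=
  posSemidef_vecMulVec_self_star v

variable [Fintype ι]

theorem posSemidef_iff_transpose_eq_and_dotProduct_nonneg {M : Matrix ι ι ℝ} :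
    M.PosSemidef ↔ Mᵀ = M ∧ ∀ x : ι → ℝ, 0 ≤ x ⬝ᵥ M *ᵥ x := by
  simp only [posSemidef_iff_dotProduct_mulVec, isHermitian_iff_isSymm, IsSymm, star_trivial]

open scoped MatrixOrder in
theorem trace_mul_nonneg_of_posSemidef {A B : Matrix ι ι ℝ} (hA : A.PosSemidef)
    (hB : B.PosSemidef) : 0 ≤ trace (A * B) := by
  classical
  obtain ⟨Y, rfl⟩ := CStarAlgebra.nonneg_iff_eq_star_mul_self.mp hB.nonneg
  calc 0 ≤ trace (Y * A * Yᴴ) := (hA.mul_mul_conjTranspose_same Y).trace_nonneg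
    _ = trace (A * (star Y * Y)) := by
      rw [trace_mul_cycle, trace_mul_comm, star_eq_conjTranspose]

theorem trace_mul_eq_sum_of_transpose_eq (A : Matrix ι ι ℝ) {B : Matrix ι ι ℝ} (hB : Bᵀ = B) :
    trace (A * B) = ∑ i, ∑ j, A i j * B i j := by
  conv_lhs => rw [← hB, ← sum_hadamard_eq]
  simp only [hadamard_apply]

end PosSemidef

section Relaxations

variable [Fintype ι]

/-- The feasible set of Nesterov's relaxation: positive semidefinite matrices dominated by a
diagonal matrix whose diagonal lies in the standard simplex. -/
def nesterovFeasible (ι : Type*) [Fintype ι] [DecidableEq ι] : Set (Matrix ι ι ℝ) :=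
  {W | W.PosSemidef ∧ ∃ u ∈ stdSimplex ℝ ι, (diagonal u - W).PosSemidef}

/-- The doubly nonnegative matrices (positive semidefinite with nonnegative entries) whose entries
sum to `1`: the feasible set of the relaxation that defines `α^cop`. -/
def doublyNonnegSimplex (ι : Type*) [Fintype ι] : Set (Matrix ι ι ℝ) :=
  {X | X.PosSemidef ∧ (∀ i j, 0 ≤ X i j) ∧ ∑ i, ∑ j, X i j = 1}

/-- The value `α_C^Nest` of Nesterov's relaxation. -/
noncomputable def alphaNest [DecidableEq ι] (C : Matrix ι ι ℝ) : ℝ :=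
  sInf ((fun W ↦ trace (C * W)) '' nesterovFeasible ι)

/-- The value `α_Q^cop` of the doubly nonnegative relaxation. -/
noncomputable def alphaCop (Q : Matrix ι ι ℝ) : ℝ :=
  sInf ((fun X ↦ trace (Q * X)) '' doublyNonnegSimplex ι)

theorem alphaNest_eq_sInf_sum [DecidableEq ι] (C : Matrix ι ι ℝ) :
    alphaNest C = sInf {r : ℝ | ∃ W : Matrix ι ι ℝ, Wᵀ = W ∧
      (∀ x : ι → ℝ, 0 ≤ x ⬝ᵥ W *ᵥ x) ∧
      (∃ u : ι → ℝ, (∀ i, 0 ≤ u i) ∧ (∑ i, u i) = 1 ∧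
        ∀ x : ι → ℝ, 0 ≤ x ⬝ᵥ (diagonal u - W) *ᵥ x) ∧
      r = ∑ i, ∑ j, C i j * W i j} := by
  refine congrArg sInf (Set.ext fun r ↦ ⟨?_, ?_⟩)
  · rintro ⟨W, ⟨hW, u, ⟨hu₀, hu₁⟩, hD⟩, rfl⟩
    rw [posSemidef_iff_transpose_eq_and_dotProduct_nonneg] at hW hD
    exact ⟨W, hW.1, hW.2, ⟨u, hu₀, hu₁, hD.2⟩, trace_mul_eq_sum_of_transpose_eq C hW.1⟩
  · rintro ⟨W, hsymm, hW, ⟨u, hu₀, hu₁, hD⟩, rfl⟩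
    have hDsymm : (diagonal u - W)ᵀ = diagonal u - W := by
      rw [transpose_sub, diagonal_transpose, hsymm]
    exact ⟨W, ⟨posSemidef_iff_transpose_eq_and_dotProduct_nonneg.mpr ⟨hsymm, hW⟩, u, ⟨hu₀, hu₁⟩,
      posSemidef_iff_transpose_eq_and_dotProduct_nonneg.mpr ⟨hDsymm, hD⟩⟩,
      trace_mul_eq_sum_of_transpose_eq C hsymm⟩

theorem alphaCop_eq_sInf_sum (Q : Matrix ι ι ℝ) :
    alphaCop Q = sInf {r : ℝ | ∃ X : Matrix ι ι ℝ, Xᵀ = X ∧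
      (∀ x : ι → ℝ, 0 ≤ x ⬝ᵥ X *ᵥ x) ∧
      (∀ i j, 0 ≤ X i j) ∧ (∑ i, ∑ j, X i j) = 1 ∧
      r = ∑ i, ∑ j, Q i j * X i j} := by
  refine congrArg sInf (Set.ext fun r ↦ ⟨?_, ?_⟩)
  · rintro ⟨X, ⟨hX, hpos, hsum⟩, rfl⟩
    rw [posSemidef_iff_transpose_eq_and_dotProduct_nonneg] at hX
    exact ⟨X, hX.1, hX.2, hpos, hsum, trace_mul_eq_sum_of_transpose_eq Q hX.1⟩
  · rintro ⟨X, hsymm, hX, hpos, hsum, rfl⟩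
    exact ⟨X, ⟨posSemidef_iff_transpose_eq_and_dotProduct_nonneg.mpr ⟨hsymm, hX⟩, hpos, hsum⟩,
      trace_mul_eq_sum_of_transpose_eq Q hsymm⟩

/-- Weak duality for Nesterov's relaxation, with dual certificate `R`. -/
theorem neg_le_trace_mul_of_mem_nesterovFeasible [DecidableEq ι] {C R W : Matrix ι ι ℝ} {c : ℝ}
    (hR : R.PosSemidef) (hCR : (C + R).PosSemidef) (hRc : ∀ i, R i i ≤ c)
    (hW : W ∈ nesterovFeasible ι) : -c ≤ trace (C * W) := by
  obtain ⟨hW, u, ⟨hu₀, hu₁⟩, hD⟩ := hW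
  have hdiag : trace (R * diagonal u) ≤ c :=
    calc trace (R * diagonal u) = ∑ i, R i i * u i := by simp only [trace, diag, mul_diagonal]
      _ ≤ ∑ i, c * u i :=
        Finset.sum_le_sum fun i _ ↦ mul_le_mul_of_nonneg_right (hRc i) (hu₀ i)
      _ = c := by rw [← Finset.mul_sum, hu₁, mul_one]
  have hsplit : trace (C * W) =
      trace ((C + R) * W) + trace (R * (diagonal u - W)) - trace (R * diagonal u) := by
    rw [add_mul, mul_sub, trace_add, trace_sub]
    ring
  linarith [trace_mul_nonneg_of_posSemidef hCR hW, trace_mul_nonneg_of_posSemidef hR hD]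

theorem single_mem_doublyNonnegSimplex [DecidableEq ι] (k : ι) :
    single k k 1 ∈ doublyNonnegSimplex ι := by
  refine ⟨?_, fun i j ↦ ?_, ?_⟩
  · rw [single_eq_single_vecMulVec_single]
    exact posSemidef_vecMulVec_self _
  · rw [single_apply]
    split_ifs <;> norm_num
  · simp only [single_apply, ite_and, Finset.sum_ite_eq, Finset.sum_ite_irrel,
      Finset.sum_const_zero, Finset.mem_univ, if_true]

theorem isLeast_trace_mul_doublyNonnegSimplex {Q : Matrix ι ι ℝ} {c : ℝ} {k : ι}
    (hQ : ∀ i j, c ≤ Q i j) (hk : Q k k = c) :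
    IsLeast ((fun X ↦ trace (Q * X)) '' doublyNonnegSimplex ι) c := by
  classical
  refine ⟨⟨single k k 1, single_mem_doublyNonnegSimplex k, ?_⟩, ?_⟩
  · simp only [trace_mul_single, hk, MulOpposite.op_one, one_smul]
  · rintro _ ⟨X, ⟨hX, hpos, hsum⟩, rfl⟩
    calc c = ∑ i, ∑ j, c * X i j := by simp only [← Finset.mul_sum, hsum, mul_one]
      _ ≤ ∑ i, ∑ j, Q i j * X i j := Finset.sum_le_sum fun i _ ↦ Finset.sum_le_sum fun j _ ↦
        mul_le_mul_of_nonneg_right (hQ i j) (hpos i j)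
      _ = trace (Q * X) := (trace_mul_eq_sum_of_transpose_eq Q
        (posSemidef_iff_transpose_eq_and_dotProduct_nonneg.mp hX).1).symm

end Relaxations

section L1Ball

variable [Fintype ι]

theorem neg_mul_sq_sum_abs_le_dotProduct_mulVec {C : Matrix ι ι ℝ} {c : ℝ}
    (hC : ∀ i j, |C i j| ≤ c) (y : ι → ℝ) : -(c * (∑ i, |y i|) ^ 2) ≤ y ⬝ᵥ C *ᵥ y := by
  have hterm (i j : ι) : -(c * (|y i| * |y j|)) ≤ y i * (C i j * y j) := by
    refine neg_le_of_abs_le ?_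
    calc |y i * (C i j * y j)| = |C i j| * (|y i| * |y j|) := by rw [abs_mul, abs_mul]; ring
      _ ≤ c * (|y i| * |y j|) := mul_le_mul_of_nonneg_right (hC i j) (by positivity)
  calc -(c * (∑ i, |y i|) ^ 2) = ∑ i, ∑ j, -(c * (|y i| * |y j|)) := by
        rw [sq, Finset.sum_mul_sum]
        simp only [Finset.mul_sum, Finset.sum_neg_distrib]
    _ ≤ ∑ i, ∑ j, y i * (C i j * y j) :=
        Finset.sum_le_sum fun i _ ↦ Finset.sum_le_sum fun j _ ↦ hterm i j
    _ = y ⬝ᵥ C *ᵥ y := by simp only [dotProduct, mulVec, Finset.mul_sum]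

theorem isLeast_dotProduct_mulVec_l1Ball {C : Matrix ι ι ℝ} {c : ℝ} {k : ι}
    (hC : ∀ i j, |C i j| ≤ c) (hk : C k k = -c) :
    IsLeast {r : ℝ | ∃ y : ι → ℝ, (∑ i, |y i|) ≤ 1 ∧ r = y ⬝ᵥ C *ᵥ y} (-c) := by
  classical
  refine ⟨⟨Pi.single k 1, ?_, ?_⟩, ?_⟩
  · simp [Pi.single_apply, apply_ite abs]
  · simp [hk]
  · rintro _ ⟨y, hy, rfl⟩
    have hc : 0 ≤ c := (abs_nonneg _).trans (hC k k)
    have hsq : (∑ i, |y i|) ^ 2 ≤ 1 :=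
      pow_le_one₀ (Finset.sum_nonneg fun i _ ↦ abs_nonneg (y i)) hy
    exact (neg_le_neg (mul_le_of_le_one_right hc hsq)).trans
      (neg_mul_sq_sum_abs_le_dotProduct_mulVec hC y)

end L1Ball

section OrthogonalProjection

theorem dotProduct_self_of_abs_eq_one [Fintype ι] {v : ι → ℝ} (hv : ∀ i, |v i| = 1) :
    v ⬝ᵥ v = Fintype.card ι := by
  simp [dotProduct, ← abs_mul_abs_self (v _), hv]

variable [Fintype ι] [DecidableEq ι]

/-- The orthogonal projection onto the hyperplane `v⊥`; it is the identity when `v = 0`, since then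
`(v ⬝ᵥ v)⁻¹ = 0`. -/
noncomputable def orthProj (v : ι → ℝ) : Matrix ι ι ℝ :=
  1 - (v ⬝ᵥ v)⁻¹ • vecMulVec v v

theorem vecMulVec_self_mul_orthProj (v : ι → ℝ) : vecMulVec v v * orthProj v = 0 := by
  rcases eq_or_ne v 0 with rfl | hv
  · simp
  · have hvv : v ⬝ᵥ v ≠ 0 := dotProduct_self_eq_zero.not.mpr hv
    rw [orthProj, mul_sub, mul_one, mul_smul_comm, vecMulVec_mul_vecMulVec, vecMulVec_smul,
      inv_smul_smul₀ hvv, sub_self]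

theorem posSemidef_orthProj (v : ι → ℝ) : (orthProj v).PosSemidef := by
  have hsymm : (orthProj v)ᴴ = orthProj v := by
    simp [orthProj, conjTranspose_eq_transpose_of_trivial, transpose_vecMulVec]
  have hidem : orthProj v * orthProj v = orthProj v := by
    nth_rw 1 [orthProj]
    rw [sub_mul, one_mul, smul_mul_assoc, vecMulVec_self_mul_orthProj, smul_zero, sub_zero]
  simpa only [hsymm, hidem] using posSemidef_conjTranspose_mul_self (orthProj v)

theorem orthProj_apply_self {v : ι → ℝ} (hv : ∀ i, |v i| = 1) (i : ι) :
    orthProj v i i = 1 - (Fintype.card ι : ℝ)⁻¹ := by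
  rw [orthProj, dotProduct_self_of_abs_eq_one hv, Matrix.sub_apply, Matrix.smul_apply,
    vecMulVec_apply, one_apply_eq, ← abs_mul_abs_self, hv, mul_one, smul_eq_mul, mul_one]

end OrthogonalProjection

section GapMatrix

variable [DecidableEq ι] {v : ι → ℝ}

/-- The matrix `v vᵀ - 2 I`, for which Nesterov's relaxation turns out to be strictly weaker than
the doubly nonnegative one when `v` is a vector of at least three signs. -/
def gapMatrix (v : ι → ℝ) : Matrix ι ι ℝ :=
  vecMulVec v v - (2 : ℝ) • 1

theorem gapMatrix_apply_self (hv : ∀ i, |v i| = 1) (i : ι) : gapMatrix v i i = -1 := by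
  rw [gapMatrix, Matrix.sub_apply, vecMulVec_apply, Matrix.smul_apply, one_apply_eq,
    ← abs_mul_abs_self, hv]
  norm_num

theorem abs_gapMatrix_apply (hv : ∀ i, |v i| = 1) (i j : ι) : |gapMatrix v i j| = 1 := by
  rcases eq_or_ne i j with rfl | hij
  · rw [gapMatrix_apply_self hv, abs_neg, abs_one]
  · simp [gapMatrix, vecMulVec_apply, hij, abs_mul, hv]

theorem gapMatrix_one_one_neg_one :
    gapMatrix ![1, 1, -1] = !![-1, 1, -1; 1, -1, -1; -1, -1, -1] := by
  ext i j
  fin_cases i <;> fin_cases j <;> norm_num [gapMatrix, vecMulVec_apply, one_apply]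

variable [Fintype ι]

theorem gapMatrix_mul_orthProj (v : ι → ℝ) :
    gapMatrix v * orthProj v = (-2 : ℝ) • orthProj v := by
  rw [gapMatrix, sub_mul, vecMulVec_self_mul_orthProj, smul_mul_assoc, one_mul, zero_sub, neg_smul]

theorem gapMatrix_add_two_smul_orthProj (v : ι → ℝ) :
    gapMatrix v + (2 : ℝ) • orthProj v = (1 - 2 * (v ⬝ᵥ v)⁻¹) • vecMulVec v v := by
  rw [gapMatrix, orthProj]
  module

theorem inv_card_smul_orthProj_mem_nesterovFeasible [Nonempty ι] (hv : ∀ i, |v i| = 1) :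
    (Fintype.card ι : ℝ)⁻¹ • orthProj v ∈ nesterovFeasible ι := by
  have hn : (0 : ℝ) ≤ (Fintype.card ι : ℝ)⁻¹ := by positivity
  refine ⟨(posSemidef_orthProj v).smul hn, fun _ ↦ (Fintype.card ι : ℝ)⁻¹,
    (stdSimplex.barycenter (𝕜 := ℝ) (X := ι)).2, ?_⟩
  have hslack : diagonal (fun _ ↦ (Fintype.card ι : ℝ)⁻¹) - (Fintype.card ι : ℝ)⁻¹ • orthProj v =
      (Fintype.card ι : ℝ)⁻¹ • (Fintype.card ι : ℝ)⁻¹ • vecMulVec v v := by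
    rw [← smul_one_eq_diagonal, orthProj, dotProduct_self_of_abs_eq_one hv]
    module
  rw [hslack]
  exact ((posSemidef_vecMulVec_self v).smul hn).smul hn

theorem trace_gapMatrix_mul_inv_card_smul_orthProj [Nonempty ι] (hv : ∀ i, |v i| = 1) :
    trace (gapMatrix v * ((Fintype.card ι : ℝ)⁻¹ • orthProj v)) = 2 / Fintype.card ι - 2 := by
  have hn : (Fintype.card ι : ℝ) ≠ 0 := Nat.cast_ne_zero.mpr Fintype.card_ne_zero
  have htrace : trace (orthProj v) = Fintype.card ι - 1 := by
    simp [trace, orthProj_apply_self hv, hn]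
  rw [mul_smul_comm, gapMatrix_mul_orthProj, trace_smul, trace_smul, htrace]
  simp only [smul_eq_mul]
  field_simp
  ring

theorem isLeast_trace_gapMatrix_mul_nesterovFeasible [Nontrivial ι] (hv : ∀ i, |v i| = 1) :
    IsLeast ((fun W ↦ trace (gapMatrix v * W)) '' nesterovFeasible ι)
      (2 / Fintype.card ι - 2) := by
  refine ⟨⟨_, inv_card_smul_orthProj_mem_nesterovFeasible hv,
    trace_gapMatrix_mul_inv_card_smul_orthProj hv⟩, ?_⟩
  rintro _ ⟨W, hW, rfl⟩
  have hcert : (gapMatrix v + (2 : ℝ) • orthProj v).PosSemidef := by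
    have hcard : (2 : ℝ) ≤ Fintype.card ι := mod_cast Fintype.one_lt_card (α := ι)
    rw [gapMatrix_add_two_smul_orthProj, dotProduct_self_of_abs_eq_one hv, ← div_eq_mul_inv]
    exact (posSemidef_vecMulVec_self v).smul
      (sub_nonneg.mpr (div_le_one_of_le₀ hcard (Nat.cast_nonneg _)))
  have hdiag (i : ι) : ((2 : ℝ) • orthProj v) i i ≤ 2 - 2 / Fintype.card ι := by
    rw [Matrix.smul_apply, orthProj_apply_self hv, smul_eq_mul, mul_sub, mul_one, ← div_eq_mul_inv]
  have hweak := neg_le_trace_mul_of_mem_nesterovFeasible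
    ((posSemidef_orthProj v).smul zero_le_two) hcert hdiag hW
  rwa [neg_sub] at hweak

end GapMatrix

theorem stmt_8_general [Fintype ι] [DecidableEq ι] {v : ι → ℝ} (hv : ∀ i, |v i| = 1)
    (hcard : 2 < Fintype.card ι) :
    let C := gapMatrix v
    alphaNest C = 2 / Fintype.card ι - 2 ∧ alphaCop (fromBlocks C (-C) (-C) C) = -1 ∧
      IsLeast {r : ℝ | ∃ y : ι → ℝ, (∑ i, |y i|) ≤ 1 ∧ r = y ⬝ᵥ C *ᵥ y} (-1) ∧
      alphaNest C < alphaCop (fromBlocks C (-C) (-C) C) := by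
  intro C
  have : Nontrivial ι := Fintype.one_lt_card_iff_nontrivial.mp (by lia)
  obtain ⟨k⟩ : Nonempty ι := inferInstance
  have hC (i j : ι) : |C i j| ≤ 1 := (abs_gapMatrix_apply hv i j).le
  have hk : C k k = -1 := gapMatrix_apply_self hv k
  have hnest : alphaNest C = 2 / Fintype.card ι - 2 :=
    (isLeast_trace_gapMatrix_mul_nesterovFeasible hv).csInf_eq
  have hcop : alphaCop (fromBlocks C (-C) (-C) C) = -1 :=
    (isLeast_trace_mul_doublyNonnegSimplex (k := Sum.inl k) (neg_le_fromBlocks_neg_apply hC)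
      (by rw [fromBlocks_apply₁₁, hk])).csInf_eq
  refine ⟨hnest, hcop, isLeast_dotProduct_mulVec_l1Ball hC hk, ?_⟩
  have hlt : (2 : ℝ) / Fintype.card ι < 1 := by
    rw [div_lt_one (by positivity)]
    exact_mod_cast hcard
  linarith

/-- Theorem 1 (strictness instance): for
`C = [[-1, 1, -1], [1, -1, -1], [-1, -1, -1]]` one has `α_C^Nest = -4/3`,
`α_{Q_C}^cop = -1 = min { yᵀCy : ‖y‖₁ ≤ 1 }`, so `α_C^Nest < α_{Q_C}^cop`. -/
theorem stmt_8 :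
    let C : Matrix (Fin 3) (Fin 3) ℝ := !![-1, 1, -1; 1, -1, -1; -1, -1, -1]
    let nest : ℝ := sInf {r : ℝ | ∃ W : Matrix (Fin 3) (Fin 3) ℝ, Wᵀ = W ∧
        (∀ x : Fin 3 → ℝ, 0 ≤ x ⬝ᵥ W *ᵥ x) ∧
        (∃ u : Fin 3 → ℝ, (∀ i, 0 ≤ u i) ∧ (∑ i, u i) = 1 ∧
          ∀ x : Fin 3 → ℝ, 0 ≤ x ⬝ᵥ (Matrix.diagonal u - W) *ᵥ x) ∧
        r = ∑ i, ∑ j, C i j * W i j}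
    let cop : ℝ := sInf {r : ℝ | ∃ X : Matrix (Fin 3 ⊕ Fin 3) (Fin 3 ⊕ Fin 3) ℝ, Xᵀ = X ∧
        (∀ x : Fin 3 ⊕ Fin 3 → ℝ, 0 ≤ x ⬝ᵥ X *ᵥ x) ∧
        (∀ i j, 0 ≤ X i j) ∧ (∑ i, ∑ j, X i j) = 1 ∧
        r = ∑ i, ∑ j, fromBlocks C (-C) (-C) C i j * X i j}
    nest = -4/3 ∧ cop = -1 ∧
      IsLeast {r : ℝ | ∃ y : Fin 3 → ℝ, (∑ i, |y i|) ≤ 1 ∧ r = y ⬝ᵥ C *ᵥ y} (-1) ∧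
      nest < cop := by
  have h := stmt_8_general (v := ![1, 1, -1]) (by simp [Fin.forall_fin_succ]) (by simp)
  rw [show -4 / 3 = (2 : ℝ) / Fintype.card (Fin 3) - 2 by norm_num]
  simpa only [gapMatrix_one_one_neg_one, alphaNest_eq_sInf_sum, alphaCop_eq_sInf_sum] using h
end

section
/- For the symmetric $3 \times 3$ matrix $C = \begin{pmatrix} -1 & 2 & -1 \\ 2 & -1 & -1 \\ -1 & -1 & -1 \end{pmatrix}$, one has $\min\{ y^\top C y : y \in \mathbb{R}^3,\ \|y\|_1 \le 1 \} = -3/2 < -1 = \alpha_C^{\mathrm{cop}}$; in particular, the bound $\alpha_C^{\mathrm{cop}}$ can strictly exceed the true minimum of the quadratic form over the $\ell^1$-ball. -/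
open Matrix

/-!
The matrix is `2κ (Eᵢⱼ + Eⱼᵢ) - J` with `κ = 3/2` and `J` the all-ones matrix, so its quadratic form
is `4κ yᵢ yⱼ - (∑ y)²`.

Every entry is at least `-1`, and the copositive relaxation averages entries with nonnegative
weights; since `-1` occurs on the diagonal, a single unit weight there is feasible and attains it.
On the `ℓ¹`-ball, writing `S = ∑ y` and `N = ∑ |y|`, both `N - S = 2 ∑ y⁻` and `N + S = 2 ∑ y⁺`
are sums of nonnegative terms, which gives `-4 yᵢ yⱼ ≤ N² - S²` and hence
`4κ yᵢ yⱼ - S² ≥ -κ N² + (κ - 1) S² ≥ -κ`. Opposite weights `±1/2` at `i` and `j` attain `-κ`.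
-/

section CommRing

variable {ι R : Type*} [Fintype ι] [CommRing R]

/-- The values of the quadratic form of `C` on the unit `ℓ¹`-ball. -/
def l1BallValues [LinearOrder R] (C : Matrix ι ι R) : Set R :=
  {r | ∃ y : ι → R, (∑ i, |y i|) ≤ 1 ∧ r = y ⬝ᵥ C *ᵥ y}

/-- The objective values `C • U` of the relaxation defining `α_C^cop`: `U` ranges over the symmetric
positive semidefinite matrices with nonnegative entries summing to `1`. -/
def copositiveValues [PartialOrder R] (C : Matrix ι ι R) : Set R :=
  {r | ∃ U : Matrix ι ι R, Uᵀ = U ∧ (∀ x : ι → R, 0 ≤ x ⬝ᵥ U *ᵥ x) ∧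
    (∀ i j, 0 ≤ U i j) ∧ (∑ i, ∑ j, U i j) = 1 ∧ r = ∑ i, ∑ j, C i j * U i j}

/-- The symmetric matrix whose quadratic form is `4κ yᵢ yⱼ - (∑ y)²`: for `κ > 1` the minimum over
the `ℓ¹`-ball lies strictly below the copositive bound. -/
def pairGapMatrix [DecidableEq ι] (i j : ι) (κ : R) : Matrix ι ι R :=
  (2 * κ) • (single i j 1 + single j i 1) - of fun _ _ => 1

theorem dotProduct_single_one_mulVec [DecidableEq ι] (i j : ι) (x y : ι → R) :
    x ⬝ᵥ single i j 1 *ᵥ y = x i * y j := by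
  simp [single_mulVec_eq, mul_comm]

theorem dotProduct_pairGapMatrix_mulVec [DecidableEq ι] (i j : ι) (κ : R) (y : ι → R) :
    y ⬝ᵥ pairGapMatrix i j κ *ᵥ y = 4 * κ * (y i * y j) - (∑ k, y k) ^ 2 := by
  have ones_form : y ⬝ᵥ (of fun _ _ => 1) *ᵥ y = (∑ k, y k) ^ 2 := by
    simp only [dotProduct, mulVec, of_apply, one_mul, ← Finset.sum_mul, sq]
  simp only [pairGapMatrix, sub_mulVec, smul_mulVec, add_mulVec, dotProduct_sub, dotProduct_smul,
    dotProduct_add, dotProduct_single_one_mulVec, ones_form, smul_eq_mul]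
  ring

variable [LinearOrder R] [IsStrictOrderedRing R]

theorem le_sum_mul_of_forall_le {m : R} {C U : Matrix ι ι R} (hC : ∀ i j, m ≤ C i j)
    (hU : ∀ i j, 0 ≤ U i j) (hsum : ∑ i, ∑ j, U i j = 1) : m ≤ ∑ i, ∑ j, C i j * U i j :=
  calc
    m = ∑ i, ∑ j, m * U i j := by simp only [← Finset.mul_sum, hsum, mul_one]
    _ ≤ ∑ i, ∑ j, C i j * U i j := by gcongr with i _ j _; exacts [hU i j, hC i j]

theorem diag_mem_copositiveValues (C : Matrix ι ι R) (k : ι) :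
    C k k ∈ copositiveValues C := by
  classical
  refine ⟨single k k 1, transpose_single .., fun x => ?_, fun i j => ?_, ?_, ?_⟩
  · rw [dotProduct_single_one_mulVec]; exact mul_self_nonneg (x k)
  · rw [single_apply]; split_ifs <;> simp
  · simp [single_apply, ite_and]
  · simp [single_apply, ite_and]

theorem isLeast_copositiveValues_diag {C : Matrix ι ι R} {k : ι}
    (hk : ∀ i j, C k k ≤ C i j) : IsLeast (copositiveValues C) (C k k) := by
  refine ⟨diag_mem_copositiveValues C k, ?_⟩
  rintro _ ⟨U, -, -, hU, hsum, rfl⟩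
  exact le_sum_mul_of_forall_le hk hU hsum

theorem isLeast_copositiveValues_pairGapMatrix [DecidableEq ι] {i j : ι} (hij : i ≠ j) {κ : R}
    (hκ : 0 ≤ κ) : IsLeast (copositiveValues (pairGapMatrix i j κ)) (-1) := by
  have diag_eq : pairGapMatrix i j κ i i = -1 := by simp [pairGapMatrix, hij.symm]
  have neg_one_le (k l : ι) : -1 ≤ pairGapMatrix i j κ k l := by
    have : 0 ≤ (2 * κ) * (single i j 1 k l + single j i 1 k l) := by
      simp only [single_apply]; split_ifs <;> simp [hκ]
    simpa only [pairGapMatrix, Matrix.sub_apply, Matrix.smul_apply, Matrix.add_apply, of_apply,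
      smul_eq_mul, neg_le_sub_iff_le_add, add_comm (1 : R), le_add_iff_nonneg_left] using this
  rw [← diag_eq] at neg_one_le ⊢
  exact isLeast_copositiveValues_diag neg_one_le

theorem neg_four_mul_le_sq_sum_abs_sub_sq_sum (y : ι → R) (i j : ι) :
    -4 * (y i * y j) ≤ (∑ k, |y k|) ^ 2 - (∑ k, y k) ^ 2 := by
  have abs_sub_nonneg (k : ι) : 0 ≤ |y k| - y k := sub_nonneg.2 (le_abs_self _)
  have abs_add_nonneg (k : ι) : 0 ≤ |y k| + y k := by linarith [neg_abs_le (y k)]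
  have abs_sub_le_sum (k : ι) : |y k| - y k ≤ ∑ l, |y l| - ∑ l, y l := by
    rw [← Finset.sum_sub_distrib]
    exact Finset.single_le_sum (fun l _ => abs_sub_nonneg l) (Finset.mem_univ k)
  have abs_add_le_sum (k : ι) : |y k| + y k ≤ ∑ l, |y l| + ∑ l, y l := by
    rw [← Finset.sum_add_distrib]
    exact Finset.single_le_sum (fun l _ => abs_add_nonneg l) (Finset.mem_univ k)
  have mul_le (k l : ι) :
      (|y k| + y k) * (|y l| - y l) ≤ (∑ m, |y m|) ^ 2 - (∑ m, y m) ^ 2 := by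
    rw [sq_sub_sq]
    exact mul_le_mul (abs_add_le_sum k) (abs_sub_le_sum l) (abs_sub_nonneg l)
      ((abs_add_nonneg k).trans (abs_add_le_sum k))
  have nonneg : 0 ≤ (∑ k, |y k|) ^ 2 - (∑ k, y k) ^ 2 :=
    (mul_nonneg (abs_add_nonneg i) (abs_sub_nonneg i)).trans (mul_le i i)
  rcases le_total 0 (y i) with hi | hi <;> rcases le_total 0 (y j) with hj | hj
  · linarith [mul_nonneg hi hj]
  · have := mul_le i j
    rw [abs_of_nonneg hi, abs_of_nonpos hj] at this
    linarith
  · have := mul_le j i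
    rw [abs_of_nonneg hj, abs_of_nonpos hi] at this
    linarith
  · linarith [mul_nonneg_of_nonpos_of_nonpos hi hj]

theorem neg_mem_lowerBounds_l1BallValues_pairGapMatrix [DecidableEq ι] (i j : ι) {κ : R}
    (hκ : 1 ≤ κ) : -κ ∈ lowerBounds (l1BallValues (pairGapMatrix i j κ)) := by
  rintro _ ⟨y, hy, rfl⟩
  have hN : (∑ k, |y k|) ^ 2 ≤ 1 :=
    pow_le_one₀ (Finset.sum_nonneg fun k _ => abs_nonneg (y k)) hy
  have hpair := neg_four_mul_le_sq_sum_abs_sub_sq_sum y i j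
  calc
    -κ ≤ κ * ((∑ k, y k) ^ 2 - (∑ k, |y k|) ^ 2) - (∑ k, y k) ^ 2 := by
      linarith [mul_nonneg (sub_nonneg.2 hκ) (sq_nonneg (∑ k, y k)),
        mul_le_of_le_one_right (zero_le_one.trans hκ) hN]
    _ ≤ κ * (4 * (y i * y j)) - (∑ k, y k) ^ 2 := by
      have := mul_le_mul_of_nonneg_left hpair (zero_le_one.trans hκ)
      linarith
    _ = y ⬝ᵥ pairGapMatrix i j κ *ᵥ y := by
      rw [dotProduct_pairGapMatrix_mulVec]; ring

end CommRing

section Field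

theorem pairGapMatrix_fin_three {K : Type*} [Field K] [CharZero K] :
    pairGapMatrix (0 : Fin 3) 1 (3 / 2 : K) = !![-1, 2, -1; 2, -1, -1; -1, -1, -1] := by
  ext i j
  fin_cases i <;> fin_cases j <;> norm_num [pairGapMatrix, single_apply]

variable {ι K : Type*} [Fintype ι] [DecidableEq ι] [Field K] [LinearOrder K]
  [IsStrictOrderedRing K]

theorem neg_mem_l1BallValues_pairGapMatrix {i j : ι} (hij : i ≠ j) (κ : K) :
    -κ ∈ l1BallValues (pairGapMatrix i j κ) := by
  refine ⟨Pi.single i (1 / 2) - Pi.single j (1 / 2), ?_, ?_⟩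
  · calc
      ∑ k, |(Pi.single i (1 / 2) - Pi.single j (1 / 2) : ι → K) k|
          ≤ ∑ k, (|(Pi.single i (1 / 2) : ι → K) k| + |(Pi.single j (1 / 2) : ι → K) k|) :=
        Finset.sum_le_sum fun k _ => abs_sub _ _
      _ = 1 := by
        simp [Finset.sum_add_distrib, Pi.single_apply, apply_ite abs, ← two_mul]
  · rw [dotProduct_pairGapMatrix_mulVec]
    simp only [Pi.sub_apply, Pi.single_eq_same, Pi.single_eq_of_ne hij,
      Pi.single_eq_of_ne hij.symm, Finset.sum_sub_distrib, Fintype.sum_pi_single']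
    ring

theorem stmt_10_general {i j : ι} (hij : i ≠ j) {κ : K} (hκ : 1 ≤ κ) :
    IsLeast (l1BallValues (pairGapMatrix i j κ)) (-κ) ∧
      IsLeast (copositiveValues (pairGapMatrix i j κ)) (-1) :=
  ⟨⟨neg_mem_l1BallValues_pairGapMatrix hij κ,
    neg_mem_lowerBounds_l1BallValues_pairGapMatrix i j hκ⟩,
    isLeast_copositiveValues_pairGapMatrix hij (zero_le_one.trans hκ)⟩

end Field

/-- Theorem 2 (second part): for `C = [[-1, 2, -1], [2, -1, -1], [-1, -1, -1]]`,
`min { yᵀCy : ‖y‖₁ ≤ 1 } = -3/2 < -1 = α_C^cop`, so the bound `α_C^cop` can strictly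
exceed the true minimum over the ℓ¹-ball. -/
theorem stmt_10 :
    let C : Matrix (Fin 3) (Fin 3) ℝ := !![-1, 2, -1; 2, -1, -1; -1, -1, -1]
    IsLeast {r : ℝ | ∃ y : Fin 3 → ℝ, (∑ i, |y i|) ≤ 1 ∧ r = y ⬝ᵥ C *ᵥ y} (-3/2) ∧
    sInf {r : ℝ | ∃ U : Matrix (Fin 3) (Fin 3) ℝ, Uᵀ = U ∧
        (∀ x : Fin 3 → ℝ, 0 ≤ x ⬝ᵥ U *ᵥ x) ∧
        (∀ i j, 0 ≤ U i j) ∧ (∑ i, ∑ j, U i j) = 1 ∧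
        r = ∑ i, ∑ j, C i j * U i j} = -1 ∧
    (-3/2 : ℝ) < -1 := by
  intro C
  obtain ⟨hball, hcop⟩ :=
    stmt_10_general (i := (0 : Fin 3)) zero_ne_one (show (1 : ℝ) ≤ 3 / 2 by norm_num)
  rw [pairGapMatrix_fin_three] at hball hcop
  exact ⟨neg_div (2 : ℝ) 3 ▸ hball, hcop.csInf_eq, by norm_num⟩
end

section
/- Let $C$ be a symmetric $n \times n$ real matrix with no positive entries (i.e., $C_{ij} \le 0$ for all $i, j$). Then $\min\{ y^\top C y : y \in \mathbb{R}^n,\ \|y\|_1 \le 1 \} = \min\{ x^\top C x : x \in \Delta^n \}$. -/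
open Matrix

/-!
Since `C` has no positive entries, enlarging the entries of a vector in absolute value and making
them nonnegative can only lower the quadratic form. Every point of the `ℓ¹` ball is dominated in
this way by a point of the simplex: take absolute values and put the missing mass on any one
coordinate.
-/

section OrderedRing

variable {R m n ι : Type*} [Fintype m] [Fintype n] [Fintype ι]

theorem exists_mem_stdSimplex_ge [Ring R] [PartialOrder R] [IsOrderedAddMonoid R] [Nonempty ι]
    {a : ι → R} (ha : 0 ≤ a) (hsum : ∑ i, a i ≤ 1) : ∃ x ∈ stdSimplex R ι, a ≤ x := by
  classical
  obtain ⟨k⟩ := ‹Nonempty ι›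
  have hle : a ≤ a + Pi.single k (1 - ∑ i, a i) :=
    le_add_of_nonneg_right (Pi.single_nonneg.2 (sub_nonneg.2 hsum))
  refine ⟨a + Pi.single k (1 - ∑ i, a i), ⟨ha.trans hle, ?_⟩, hle⟩
  simp [Finset.sum_add_distrib]

variable [CommRing R] [LinearOrder R] [IsOrderedRing R]

theorem dotProduct_mulVec_le_dotProduct_mulVec_of_abs_le {C : Matrix m n R}
    (hC : ∀ i j, C i j ≤ 0) {u x : m → R} {v y : n → R} (hux : |u| ≤ x) (hvy : |v| ≤ y) :
    x ⬝ᵥ C *ᵥ y ≤ u ⬝ᵥ C *ᵥ v := by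
  simp only [dotProduct, mulVec, Finset.mul_sum]
  refine Finset.sum_le_sum fun i _ => Finset.sum_le_sum fun j _ => ?_
  have huv : u i * v j ≤ x i * y j :=
    calc u i * v j ≤ |u i| * |v j| := (le_abs_self _).trans_eq (abs_mul _ _)
      _ ≤ x i * y j := mul_le_mul (hux i) (hvy j) (abs_nonneg _) ((abs_nonneg _).trans (hux i))
  calc x i * (C i j * y j) = C i j * (x i * y j) := mul_left_comm _ _ _
    _ ≤ C i j * (u i * v j) := mul_le_mul_of_nonpos_left huv (hC i j)
    _ = u i * (C i j * v j) := mul_left_comm _ _ _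

theorem stdSimplex_subset_setOf_sum_abs_le_one : stdSimplex R ι ⊆ {y | ∑ i, |y i| ≤ 1} := by
  rintro x ⟨hx_nonneg, hx_sum⟩
  simp only [Set.mem_ofPred_eq, abs_of_nonneg (hx_nonneg _), hx_sum, le_refl]

theorem isCoinitialFor_image_dotProduct_mulVec_stdSimplex [Nonempty ι] {C : Matrix ι ι R}
    (hC : ∀ i j, C i j ≤ 0) :
    IsCoinitialFor ((fun y => y ⬝ᵥ C *ᵥ y) '' {y | ∑ i, |y i| ≤ 1})
      ((fun x => x ⬝ᵥ C *ᵥ x) '' stdSimplex R ι) := by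
  rintro _ ⟨y, hy, rfl⟩
  obtain ⟨x, hx, hyx⟩ := exists_mem_stdSimplex_ge (abs_nonneg y) hy
  exact ⟨_, ⟨x, hx, rfl⟩, dotProduct_mulVec_le_dotProduct_mulVec_of_abs_le hC hyx hyx⟩

end OrderedRing

section Real

variable {ι : Type*} [Fintype ι] [Nonempty ι]

theorem exists_isLeast_image_dotProduct_mulVec_stdSimplex (C : Matrix ι ι ℝ) :
    ∃ α, IsLeast ((fun x => x ⬝ᵥ C *ᵥ x) '' stdSimplex ℝ ι) α := by
  classical
  have hcont : Continuous fun x : ι → ℝ => x ⬝ᵥ C *ᵥ x :=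
    continuous_id.dotProduct (continuous_const.matrix_mulVec continuous_id)
  have hne : (stdSimplex ℝ ι).Nonempty := ⟨_, single_mem_stdSimplex ℝ (Classical.arbitrary ι)⟩
  exact ((isCompact_stdSimplex ℝ ι).image hcont).exists_isLeast (hne.image _)

theorem stmt_11_general {C : Matrix ι ι ℝ} (hC : ∀ i j, C i j ≤ 0) :
    ∃ α, IsLeast ((fun y => y ⬝ᵥ C *ᵥ y) '' {y : ι → ℝ | ∑ i, |y i| ≤ 1}) α ∧
      IsLeast ((fun x => x ⬝ᵥ C *ᵥ x) '' stdSimplex ℝ ι) α := by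
  obtain ⟨α, hα⟩ := exists_isLeast_image_dotProduct_mulVec_stdSimplex C
  have hmem := Set.image_mono stdSimplex_subset_setOf_sum_abs_le_one hα.1
  have hlower := lowerBounds_mono_of_isCoinitialFor
    (isCoinitialFor_image_dotProduct_mulVec_stdSimplex hC) hα.2
  exact ⟨α, ⟨hmem, hlower⟩, hα⟩

end Real

/-- Proposition 1: for a symmetric matrix `C` with no positive entries, the minimum of
the quadratic form over the ℓ¹-ball equals its minimum over the standard simplex. -/
theorem stmt_11 (n : ℕ) (hn : 0 < n) (C : Matrix (Fin n) (Fin n) ℝ) (hC : Cᵀ = C)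
    (hneg : ∀ i j, C i j ≤ 0) :
    ∃ α : ℝ,
      IsLeast {r : ℝ | ∃ y : Fin n → ℝ, (∑ i, |y i|) ≤ 1 ∧ r = y ⬝ᵥ C *ᵥ y} α ∧
      IsLeast {r : ℝ | ∃ x : Fin n → ℝ, (∀ i, 0 ≤ x i) ∧ (∑ i, x i) = 1 ∧
          r = x ⬝ᵥ C *ᵥ x} α := by
  have : Nonempty (Fin n) := ⟨⟨0, hn⟩⟩
  simpa only [Set.image, stdSimplex, Set.mem_ofPred_eq, and_assoc, eq_comm] using
    stmt_11_general hneg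
end

section
/- Let $C$ be a symmetric $n \times n$ real matrix with no positive entries (i.e., $C_{ij} \le 0$ for all $i, j$). Then $\alpha_{Q_C}^{\mathrm{cop}} = \alpha_C^{\mathrm{cop}}$, where $\alpha_{Q_C}^{\mathrm{cop}} = \inf\{ Q_C \bullet X : X \text{ symmetric } 2n \times 2n \text{ positive semidefinite},\ X_{ij} \ge 0 \text{ for all } i,j,\ \sum_{i,j} X_{ij} = 1 \}$ with $Q_C = \begin{pmatrix} C & -C \\ -C & C \end{pmatrix}$, and $\alpha_C^{\mathrm{cop}} = \inf\{ C \bullet U : U \text{ symmetric } n \times n \text{ positive semidefinite},\ U_{ij} \ge 0 \text{ for all } i,j,\ \sum_{i,j} U_{ij} = 1 \}$. -/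
open Matrix

/-!
Write `D` for the sum of the two diagonal blocks of a feasible `X` and `E` for the sum of the two
off-diagonal ones. Then `Q_C • X = C • D - C • E ≥ C • D`, because `C ≤ 0 ≤ E`. Testing the positive
semidefiniteness of `X` on the vector `(1, -1)` shows that the entries of `D` sum to at least those
of `E`, so their sum `s` lies in `[1/2, 1]`; as `C • D ≤ 0`, the feasible matrix `s⁻¹ D` satisfies
`C • s⁻¹ D ≤ C • D`. Conversely, a feasible `U` extends by zero blocks to a feasible `X` with the
same objective value.
-/

section EntrySum

variable {m n R : Type*} [Fintype m] [Fintype n]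

/-- The sum of all entries of a matrix. The trace inner product `C • X` of symmetric matrices is
written `entrySum (C ⊙ X)`. -/
def entrySum [AddCommMonoid R] (X : Matrix m n R) : R :=
  ∑ i, ∑ j, X i j

lemma entrySum_zero [AddCommMonoid R] : entrySum (0 : Matrix m n R) = 0 := by
  simp only [entrySum, Matrix.zero_apply, Finset.sum_const_zero]

lemma entrySum_add [AddCommMonoid R] (X Y : Matrix m n R) :
    entrySum (X + Y) = entrySum X + entrySum Y := by
  simp only [entrySum, Matrix.add_apply, Finset.sum_add_distrib]

lemma entrySum_smul [NonUnitalNonAssocSemiring R] (a : R) (X : Matrix m n R) :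
    entrySum (a • X) = a * entrySum X := by
  simp only [entrySum, Matrix.smul_apply, smul_eq_mul, Finset.mul_sum]

lemma one_dotProduct_mulVec_one [NonAssocSemiring R] (X : Matrix m n R) :
    1 ⬝ᵥ X *ᵥ 1 = entrySum X := by
  simp only [entrySum, one_dotProduct, mulVec, dotProduct_one]

lemma entrySum_nonneg [AddCommMonoid R] [PartialOrder R] [IsOrderedAddMonoid R]
    {X : Matrix m n R} (hX : ∀ i j, 0 ≤ X i j) : 0 ≤ entrySum X :=
  Finset.sum_nonneg fun i _ => Finset.sum_nonneg fun j _ => hX i j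

lemma entrySum_hadamard_nonpos [NonUnitalNonAssocSemiring R] [PartialOrder R]
    [IsOrderedAddMonoid R] [MulPosMono R] {C X : Matrix m n R} (hC : ∀ i j, C i j ≤ 0)
    (hX : ∀ i j, 0 ≤ X i j) : entrySum (C ⊙ X) ≤ 0 :=
  Finset.sum_nonpos fun i _ => Finset.sum_nonpos fun j _ =>
    mul_nonpos_of_nonpos_of_nonneg (hC i j) (hX i j)

end EntrySum

section BlockSums

variable {m n R : Type*}

/-- The sum `X₁₁ + X₂₂` of the diagonal blocks of a `2 × 2` block matrix with blocks of equal
size. -/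
def diagBlockSum [Add R] (X : Matrix (m ⊕ m) (n ⊕ n) R) : Matrix m n R :=
  X.toBlocks₁₁ + X.toBlocks₂₂

/-- The sum `X₁₂ + X₂₁` of the off-diagonal blocks of a `2 × 2` block matrix with blocks of equal
size. -/
def offDiagBlockSum [Add R] (X : Matrix (m ⊕ m) (n ⊕ n) R) : Matrix m n R :=
  X.toBlocks₁₂ + X.toBlocks₂₁

lemma diagBlockSum_fromBlocks [Add R] (A B C D : Matrix m n R) :
    diagBlockSum (fromBlocks A B C D) = A + D := rfl

lemma offDiagBlockSum_fromBlocks [Add R] (A B C D : Matrix m n R) :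
    offDiagBlockSum (fromBlocks A B C D) = B + C := rfl

variable [Fintype m] [Fintype n]

lemma entrySum_diagBlockSum_add_offDiagBlockSum [AddCommMonoid R]
    (X : Matrix (m ⊕ m) (n ⊕ n) R) :
    entrySum (diagBlockSum X) + entrySum (offDiagBlockSum X) = entrySum X := by
  simp only [entrySum, diagBlockSum, offDiagBlockSum, Matrix.add_apply, toBlocks₁₁, toBlocks₁₂,
    toBlocks₂₁, toBlocks₂₂, of_apply, Fintype.sum_sum_type, Finset.sum_add_distrib]
  abel

lemma entrySum_fromBlocks_neg_hadamard [NonUnitalNonAssocRing R] (C : Matrix m n R)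
    (X : Matrix (m ⊕ m) (n ⊕ n) R) :
    entrySum (fromBlocks C (-C) (-C) C ⊙ X) =
      entrySum (C ⊙ diagBlockSum X) - entrySum (C ⊙ offDiagBlockSum X) := by
  simp only [entrySum, diagBlockSum, offDiagBlockSum, hadamard_apply, Matrix.add_apply, toBlocks₁₁,
    toBlocks₁₂, toBlocks₂₁, toBlocks₂₂, of_apply, Fintype.sum_sum_type, Finset.sum_add_distrib,
    fromBlocks_apply₁₁, fromBlocks_apply₁₂, fromBlocks_apply₂₁, fromBlocks_apply₂₂,
    Matrix.neg_apply, neg_mul, mul_add, Finset.sum_neg_distrib]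
  abel

lemma elim_one_neg_one_dotProduct_mulVec [NonAssocRing R] (X : Matrix (m ⊕ m) (n ⊕ n) R) :
    Sum.elim (1 : m → R) (-1) ⬝ᵥ X *ᵥ Sum.elim 1 (-1) =
      entrySum (diagBlockSum X) - entrySum (offDiagBlockSum X) := by
  rw [← fromBlocks_toBlocks X, fromBlocks_mulVec, sumElim_dotProduct_sumElim]
  simp only [Sum.elim_comp_inl, Sum.elim_comp_inr, mulVec_neg, dotProduct_add, neg_dotProduct,
    dotProduct_neg, one_dotProduct_mulVec_one, diagBlockSum_fromBlocks,
    offDiagBlockSum_fromBlocks, entrySum_add]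
  abel

lemma entrySum_offDiagBlockSum_le_diagBlockSum [Ring R] [PartialOrder R] [IsOrderedAddMonoid R]
    [StarRing R] {X : Matrix (n ⊕ n) (n ⊕ n) R} (hX : X.PosSemidef) :
    entrySum (offDiagBlockSum X) ≤ entrySum (diagBlockSum X) := by
  have star_elim : star (Sum.elim 1 (-1) : n ⊕ n → R) = Sum.elim (1 : n → R) (-1) := by
    ext (i | i) <;> simp
  have quadForm_nonneg := hX.dotProduct_mulVec_nonneg (Sum.elim 1 (-1))
  rwa [star_elim, elim_one_neg_one_dotProduct_mulVec, sub_nonneg] at quadForm_nonneg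

end BlockSums

lemma posSemidef_fromBlocks_zero {m n R : Type*} [Finite m] [Finite n] [Ring R] [PartialOrder R]
    [StarRing R] {U : Matrix m m R} (hU : U.PosSemidef) :
    (fromBlocks U 0 0 0 : Matrix (m ⊕ n) (m ⊕ n) R).PosSemidef := by
  classical
  have := Fintype.ofFinite m
  let inclusion : Matrix (m ⊕ n) m R := fromRows 1 0
  have conj_inclusion : inclusion * U * inclusionᴴ = fromBlocks U 0 0 0 := by
    rw [conjTranspose_fromRows_eq_fromCols_conjTranspose, fromRows_mul, fromRows_mul_fromCols]
    simp
  exact conj_inclusion ▸ hU.mul_mul_conjTranspose_same inclusion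

/-- Doubly nonnegative matrices: positive semidefinite with nonnegative entries. -/
structure IsDoublyNonneg {n R : Type*} [Ring R] [PartialOrder R] [StarRing R]
    (X : Matrix n n R) : Prop where
  posSemidef : X.PosSemidef
  nonneg : ∀ i j, 0 ≤ X i j

namespace IsDoublyNonneg

variable {m n R : Type*}

lemma smul [CommRing R] [PartialOrder R] [StarRing R] [StarOrderedRing R]
    {X : Matrix n n R} (hX : IsDoublyNonneg X) {a : R} (ha : 0 ≤ a) : IsDoublyNonneg (a • X) where
  posSemidef := hX.posSemidef.smul ha
  nonneg _ _ := mul_nonneg ha (hX.nonneg _ _)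

protected lemma diagBlockSum [Ring R] [PartialOrder R] [IsOrderedAddMonoid R] [StarRing R]
    {X : Matrix (n ⊕ n) (n ⊕ n) R} (hX : IsDoublyNonneg X) : IsDoublyNonneg (diagBlockSum X) where
  posSemidef := (hX.posSemidef.submatrix Sum.inl).add (hX.posSemidef.submatrix Sum.inr)
  nonneg _ _ := add_nonneg (hX.nonneg _ _) (hX.nonneg _ _)

lemma fromBlocks_zero [Finite m] [Finite n] [Ring R] [PartialOrder R] [StarRing R]
    {U : Matrix m m R} (hU : IsDoublyNonneg U) :
    IsDoublyNonneg (fromBlocks U 0 0 0 : Matrix (m ⊕ n) (m ⊕ n) R) where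
  posSemidef := posSemidef_fromBlocks_zero hU.posSemidef
  nonneg := by rintro (_ | _) (_ | _) <;> simp [hU.nonneg]

variable [Fintype n]

lemma exists_entrySum_eq_one_hadamard_le [Field R] [LinearOrder R] [StarRing R]
    [StarOrderedRing R] {C A : Matrix n n R} (hA : IsDoublyNonneg A) (hC : ∀ i j, C i j ≤ 0)
    (hpos : 0 < entrySum A) (hle : entrySum A ≤ 1) :
    ∃ U, (IsDoublyNonneg U ∧ entrySum U = 1) ∧ entrySum (C ⊙ U) ≤ entrySum (C ⊙ A) := by
  refine ⟨(entrySum A)⁻¹ • A, ⟨hA.smul (inv_nonneg.mpr hpos.le), ?_⟩, ?_⟩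
  · rw [entrySum_smul, inv_mul_cancel₀ hpos.ne']
  · rw [hadamard_smul, entrySum_smul]
    exact mul_le_of_one_le_left (entrySum_hadamard_nonpos hC hA.nonneg) <|
      (one_le_inv₀ hpos).mpr hle

lemma exists_entrySum_eq_one_hadamard_le_fromBlocks [Field R] [LinearOrder R] [StarRing R]
    [StarOrderedRing R] {C : Matrix n n R} {X : Matrix (n ⊕ n) (n ⊕ n) R}
    (hX : IsDoublyNonneg X) (hC : ∀ i j, C i j ≤ 0) (hsum : entrySum X = 1) :
    ∃ U, (IsDoublyNonneg U ∧ entrySum U = 1) ∧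
      entrySum (C ⊙ U) ≤ entrySum (fromBlocks C (-C) (-C) C ⊙ X) := by
  have offDiag_nonneg : ∀ i j, 0 ≤ offDiagBlockSum X i j := fun _ _ =>
    add_nonneg (hX.nonneg _ _) (hX.nonneg _ _)
  have total := (entrySum_diagBlockSum_add_offDiagBlockSum X).trans hsum
  have offDiag_le_diag := entrySum_offDiagBlockSum_le_diagBlockSum hX.posSemidef
  have diag_sum_pos : 0 < entrySum (diagBlockSum X) := by linarith
  have diag_sum_le_one : entrySum (diagBlockSum X) ≤ 1 := by
    linarith [entrySum_nonneg offDiag_nonneg]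
  obtain ⟨U, hU, hUle⟩ :=
    hX.diagBlockSum.exists_entrySum_eq_one_hadamard_le hC diag_sum_pos diag_sum_le_one
  refine ⟨U, hU, hUle.trans ?_⟩
  rw [entrySum_fromBlocks_neg_hadamard]
  exact (le_sub_self_iff _).mpr (entrySum_hadamard_nonpos hC offDiag_nonneg)

end IsDoublyNonneg

section CopBound

variable {n : Type*} [Fintype n]

lemma isDoublyNonneg_iff_dotProduct_mulVec {X : Matrix n n ℝ} :
    IsDoublyNonneg X ↔ Xᵀ = X ∧ (∀ x, 0 ≤ x ⬝ᵥ X *ᵥ x) ∧ ∀ i j, 0 ≤ X i j := by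
  rw [← and_assoc]
  exact ⟨fun h => ⟨posSemidef_iff_dotProduct_mulVec.mp h.posSemidef, h.nonneg⟩,
    fun h => ⟨posSemidef_iff_dotProduct_mulVec.mpr h.1, h.2⟩⟩

/-- The bound `α_C^cop`: the infimum of `C • U` over the doubly nonnegative matrices `U` whose
entries sum to `1`. For an empty index type there is no such `U` and the value is `sInf ∅ = 0`. -/
noncomputable def copBound (C : Matrix n n ℝ) : ℝ :=
  sInf ((fun U => entrySum (C ⊙ U)) '' {U | IsDoublyNonneg U ∧ entrySum U = 1})

lemma copBound_eq_sInf (C : Matrix n n ℝ) :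
    copBound C = sInf {r : ℝ | ∃ U : Matrix n n ℝ, Uᵀ = U ∧ (∀ x, 0 ≤ x ⬝ᵥ U *ᵥ x) ∧
      (∀ i j, 0 ≤ U i j) ∧ (∑ i, ∑ j, U i j) = 1 ∧ r = ∑ i, ∑ j, C i j * U i j} := by
  simp only [copBound, Set.image, Set.mem_ofPred_eq, isDoublyNonneg_iff_dotProduct_mulVec,
    entrySum, hadamard_apply, and_assoc, eq_comm]

theorem stmt_14_general (C : Matrix n n ℝ) (hC : ∀ i j, C i j ≤ 0) :
    copBound (fromBlocks C (-C) (-C) C) = copBound C := by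
  apply csInf_eq_csInf_of_forall_exists_le
  · rintro _ ⟨X, ⟨hX, hsum⟩, rfl⟩
    obtain ⟨U, hU, hle⟩ := hX.exists_entrySum_eq_one_hadamard_le_fromBlocks hC hsum
    exact ⟨_, Set.mem_image_of_mem _ hU, hle⟩
  · rintro _ ⟨U, ⟨hU, hsum⟩, rfl⟩
    refine ⟨_, Set.mem_image_of_mem _ ⟨hU.fromBlocks_zero, ?_⟩, le_of_eq ?_⟩
    · rw [← entrySum_diagBlockSum_add_offDiagBlockSum, diagBlockSum_fromBlocks,
        offDiagBlockSum_fromBlocks, add_zero, add_zero, entrySum_zero, add_zero, hsum]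
    · rw [entrySum_fromBlocks_neg_hadamard, diagBlockSum_fromBlocks, offDiagBlockSum_fromBlocks,
        add_zero, add_zero, hadamard_zero, entrySum_zero, sub_zero]

end CopBound

/-- Theorem 3 (first part): for a symmetric `C` with no positive entries,
`α_{Q_C}^cop = α_C^cop`. -/
theorem stmt_14 (n : ℕ) (C : Matrix (Fin n) (Fin n) ℝ) (hC : Cᵀ = C)
    (hneg : ∀ i j, C i j ≤ 0) :
    sInf {r : ℝ | ∃ X : Matrix (Fin n ⊕ Fin n) (Fin n ⊕ Fin n) ℝ, Xᵀ = X ∧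
        (∀ x : Fin n ⊕ Fin n → ℝ, 0 ≤ x ⬝ᵥ X *ᵥ x) ∧
        (∀ i j, 0 ≤ X i j) ∧ (∑ i, ∑ j, X i j) = 1 ∧
        r = ∑ i, ∑ j, fromBlocks C (-C) (-C) C i j * X i j} =
    sInf {r : ℝ | ∃ U : Matrix (Fin n) (Fin n) ℝ, Uᵀ = U ∧
        (∀ x : Fin n → ℝ, 0 ≤ x ⬝ᵥ U *ᵥ x) ∧
        (∀ i j, 0 ≤ U i j) ∧ (∑ i, ∑ j, U i j) = 1 ∧
        r = ∑ i, ∑ j, C i j * U i j} := by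
  simpa only [copBound_eq_sInf] using stmt_14_general C hneg
end

section
/- Let $C$ be a symmetric $n \times n$ real matrix and let $1 \le p \le 2$. Then $n^{2(p-1)/p} \, \alpha_{Q_C}^{\mathrm{cop}} \le \min\{ y^\top C y : y \in \mathbb{R}^n,\ \|y\|_p \le 1 \}$, where $\alpha_{Q_C}^{\mathrm{cop}} = \inf\{ Q_C \bullet X : X \text{ symmetric } 2n \times 2n \text{ positive semidefinite},\ X_{ij} \ge 0 \text{ for all } i,j,\ \sum_{i,j} X_{ij} = 1 \}$ with $Q_C = \begin{pmatrix} C & -C \\ -C & C \end{pmatrix}$. -/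
open Matrix

/-!
Every point of the `ℓ¹`-ball is a difference `a - b` with `(a, b)` in the standard simplex, and
`Q_C` has value `(a - b)ᵀ C (a - b)` at `(a, b)`. Relaxing the rank-one matrix `(a, b) (a, b)ᵀ` to
a doubly nonnegative one therefore bounds `C` from below on the `ℓ¹`-ball, and the `ℓᵖ`-ball is
contained in the `ℓ¹`-ball of radius `n ^ ((p - 1) / p)`.
-/

section

variable {ι κ : Type*} [Fintype ι] [Fintype κ]

variable (κ) in
/-- The doubly nonnegative matrices (positive semidefinite with nonnegative entries) whose entries
sum to one: a convex relaxation of the rank-one matrices `z zᵀ` with `z` in the standard simplex. -/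
def dnnSimplex : Set (Matrix κ κ ℝ) :=
  {X | X.PosSemidef ∧ (∀ i j, 0 ≤ X i j) ∧ ∑ i, ∑ j, X i j = 1}

/-- The doubly nonnegative relaxation of the minimum of `zᵀ Q z` over the standard simplex, written
`α_Q^cop` in the paper. For empty `κ` it is the infimum of the empty set, hence `0`. -/
noncomputable def dnnBound (Q : Matrix κ κ ℝ) : ℝ :=
  sInf ((fun X ↦ ∑ i, ∑ j, Q i j * X i j) '' dnnSimplex κ)

lemma posSemidef_iff_transpose_eq_and_dotProduct_mulVec_nonneg {X : Matrix κ κ ℝ} :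
    X.PosSemidef ↔ Xᵀ = X ∧ ∀ x : κ → ℝ, 0 ≤ x ⬝ᵥ X *ᵥ x := by
  simp only [posSemidef_iff_dotProduct_mulVec, IsHermitian, conjTranspose_eq_transpose_of_trivial,
    star_trivial]

lemma dnnBound_eq_sInf (Q : Matrix κ κ ℝ) :
    dnnBound Q = sInf {r : ℝ | ∃ X : Matrix κ κ ℝ, Xᵀ = X ∧ (∀ x : κ → ℝ, 0 ≤ x ⬝ᵥ X *ᵥ x) ∧
      (∀ i j, 0 ≤ X i j) ∧ (∑ i, ∑ j, X i j) = 1 ∧ r = ∑ i, ∑ j, Q i j * X i j} := by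
  simp only [dnnBound, dnnSimplex, posSemidef_iff_transpose_eq_and_dotProduct_mulVec_nonneg,
    Set.image, Set.mem_ofPred_eq, and_assoc, eq_comm]

lemma dnnBound_of_isEmpty [IsEmpty κ] (Q : Matrix κ κ ℝ) : dnnBound Q = 0 := by
  simp [dnnBound, dnnSimplex]

lemma bddBelow_image_dnnSimplex (Q : Matrix κ κ ℝ) :
    BddBelow ((fun X ↦ ∑ i, ∑ j, Q i j * X i j) '' dnnSimplex κ) := by
  obtain ⟨m, hm⟩ := (Set.finite_range fun ij : κ × κ ↦ Q ij.1 ij.2).bddBelow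
  refine ⟨m, ?_⟩
  rintro _ ⟨X, ⟨-, hX_nonneg, hX_sum⟩, rfl⟩
  calc m = ∑ i, ∑ j, m * X i j := by simp only [← Finset.mul_sum, hX_sum, mul_one]
    _ ≤ ∑ i, ∑ j, Q i j * X i j := by
      gcongr with i _ j _
      · exact hX_nonneg i j
      · exact hm ⟨(i, j), rfl⟩

lemma vecMulVec_self_mem_dnnSimplex {z : κ → ℝ} (hz : z ∈ stdSimplex ℝ κ) :
    vecMulVec z z ∈ dnnSimplex κ := by
  refine ⟨by simpa using posSemidef_vecMulVec_self_star z,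
    fun i j ↦ mul_nonneg (hz.1 i) (hz.1 j), ?_⟩
  simp only [vecMulVec_apply, ← Finset.mul_sum, hz.2, mul_one]

lemma dnnBound_le_dotProduct_mulVec (Q : Matrix κ κ ℝ) {z : κ → ℝ} (hz : z ∈ stdSimplex ℝ κ) :
    dnnBound Q ≤ z ⬝ᵥ Q *ᵥ z := by
  refine csInf_le (bddBelow_image_dnnSimplex Q)
    ⟨vecMulVec z z, vecMulVec_self_mem_dnnSimplex hz, ?_⟩
  simp only [vecMulVec_apply, dotProduct, mulVec, Finset.mul_sum, mul_left_comm]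

lemma sumElim_dotProduct_fromBlocks_neg_mulVec {R : Type*} [NonUnitalNonAssocRing R]
    (C : Matrix ι ι R) (a b : ι → R) :
    Sum.elim a b ⬝ᵥ fromBlocks C (-C) (-C) C *ᵥ Sum.elim a b = (a - b) ⬝ᵥ C *ᵥ (a - b) := by
  simp only [fromBlocks_mulVec, Sum.elim_comp_inl, Sum.elim_comp_inr, sumElim_dotProduct_sumElim,
    neg_mulVec, dotProduct_add, dotProduct_neg, mulVec_sub, sub_dotProduct, dotProduct_sub]
  abel

lemma exists_sumElim_mem_stdSimplex_sub_eq [Nonempty ι] {y : ι → ℝ} (hy : ∑ i, |y i| ≤ 1) :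
    ∃ a b : ι → ℝ, Sum.elim a b ∈ stdSimplex ℝ (ι ⊕ ι) ∧ a - b = y := by
  -- The slack `1 - ‖y‖₁` is spread evenly over all `2 n` coordinates, which cancels in `a - b`.
  let t : ℝ := (1 - ∑ i, |y i|) / (2 * Fintype.card ι)
  have ht : 0 ≤ t := div_nonneg (sub_nonneg.2 hy) (by positivity)
  refine ⟨fun i ↦ (y i)⁺ + t, fun i ↦ (y i)⁻ + t, ⟨?_, ?_⟩, ?_⟩
  · rintro (i | i)
    · exact add_nonneg (posPart_nonneg _) ht
    · exact add_nonneg (negPart_nonneg _) ht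
  · calc ∑ k, Sum.elim (fun i ↦ (y i)⁺ + t) (fun i ↦ (y i)⁻ + t) k
        = ∑ i, (|y i| + 2 * t) := by
          simp only [Fintype.sum_sum_type, Sum.elim_inl, Sum.elim_inr, ← Finset.sum_add_distrib,
            ← posPart_add_negPart]
          exact Finset.sum_congr rfl fun i _ ↦ by ring
      _ = ∑ i, |y i| + Fintype.card ι * (2 * t) := by
          simp only [Finset.sum_add_distrib, Finset.sum_const, Finset.card_univ, nsmul_eq_mul]
      _ = 1 := by
          simp only [t]
          field_simp
          ring
  · ext i
    simp only [Pi.sub_apply, add_sub_add_right_eq_sub, posPart_sub_negPart]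

lemma dnnBound_fromBlocks_le_of_sum_abs_le_one [Nonempty ι] (C : Matrix ι ι ℝ) {y : ι → ℝ}
    (hy : ∑ i, |y i| ≤ 1) :
    dnnBound (fromBlocks C (-C) (-C) C) ≤ y ⬝ᵥ C *ᵥ y := by
  obtain ⟨a, b, hab, rfl⟩ := exists_sumElim_mem_stdSimplex_sub_eq hy
  rw [← sumElim_dotProduct_fromBlocks_neg_mulVec]
  exact dnnBound_le_dotProduct_mulVec _ hab

lemma sq_mul_dnnBound_fromBlocks_le [Nonempty ι] (C : Matrix ι ι ℝ) {y : ι → ℝ} {c : ℝ}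
    (hc : 0 < c) (hy : ∑ i, |y i| ≤ c) :
    c ^ 2 * dnnBound (fromBlocks C (-C) (-C) C) ≤ y ⬝ᵥ C *ᵥ y := by
  have hy_scaled : ∑ i, |(c⁻¹ • y) i| ≤ 1 := by
    simp only [Pi.smul_apply, smul_eq_mul, abs_mul, abs_of_pos (inv_pos.2 hc), ← Finset.mul_sum]
    exact inv_mul_le_one_of_le₀ hy hc.le
  calc c ^ 2 * dnnBound (fromBlocks C (-C) (-C) C)
      ≤ c ^ 2 * ((c⁻¹ • y) ⬝ᵥ C *ᵥ (c⁻¹ • y)) := by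
        gcongr
        exact dnnBound_fromBlocks_le_of_sum_abs_le_one C hy_scaled
    _ = y ⬝ᵥ C *ᵥ y := by
        simp only [mulVec_smul, smul_dotProduct, dotProduct_smul, smul_eq_mul]
        field_simp

lemma sum_abs_le_card_rpow_mul_rpow_sum {α : Type*} (s : Finset α) (f : α → ℝ) {p : ℝ}
    (hp : 1 ≤ p) :
    ∑ i ∈ s, |f i| ≤ (s.card : ℝ) ^ ((p - 1) / p) * (∑ i ∈ s, |f i| ^ p) ^ (1 / p) := by
  have hp_pos : 0 < p := by linarith
  have h_nonneg : 0 ≤ ∑ i ∈ s, |f i| := by positivity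
  calc ∑ i ∈ s, |f i| = ((∑ i ∈ s, |f i|) ^ p) ^ (1 / p) := by
        rw [one_div, Real.rpow_rpow_inv h_nonneg hp_pos.ne']
    _ ≤ ((s.card : ℝ) ^ (p - 1) * ∑ i ∈ s, |f i| ^ p) ^ (1 / p) := by
        gcongr
        exact Real.rpow_sum_le_const_mul_sum_rpow s f hp
    _ = (s.card : ℝ) ^ ((p - 1) / p) * (∑ i ∈ s, |f i| ^ p) ^ (1 / p) := by
        rw [Real.mul_rpow (by positivity) (by positivity), ← Real.rpow_mul (by positivity),
          mul_one_div]

theorem stmt_16_general (C : Matrix ι ι ℝ) {p : ℝ} (hp : 1 ≤ p) (y : ι → ℝ)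
    (hy : (∑ i, |y i| ^ p) ^ (1 / p) ≤ 1) :
    (Fintype.card ι : ℝ) ^ (2 * (p - 1) / p) * dnnBound (fromBlocks C (-C) (-C) C) ≤
      y ⬝ᵥ C *ᵥ y := by
  cases isEmpty_or_nonempty ι
  · simp [dnnBound_of_isEmpty]
  let c : ℝ := (Fintype.card ι : ℝ) ^ ((p - 1) / p)
  have hc : 0 < c := by positivity
  have hc_sq : (Fintype.card ι : ℝ) ^ (2 * (p - 1) / p) = c ^ 2 := by
    rw [← Real.rpow_mul_natCast (by positivity)]
    congr 1
    push_cast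
    ring
  have hy_sum : ∑ i, |y i| ≤ c :=
    (sum_abs_le_card_rpow_mul_rpow_sum Finset.univ y hp).trans (mul_le_of_le_one_right hc.le hy)
  rw [hc_sq]
  exact sq_mul_dnnBound_fromBlocks_le C hc hy_sum

end

/-- Theorem 4: for `1 ≤ p ≤ 2`, `n^{2(p-1)/p} · α_{Q_C}^cop` is a valid lower bound for
the minimum of the quadratic form over the ℓᵖ-ball. -/
theorem stmt_16 (n : ℕ) (C : Matrix (Fin n) (Fin n) ℝ) (hC : Cᵀ = C)
    (p : ℝ) (hp1 : 1 ≤ p) (hp2 : p ≤ 2) :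
    ∀ y : Fin n → ℝ, (∑ i, |y i| ^ p) ^ (1 / p) ≤ 1 →
      (n : ℝ) ^ (2 * (p - 1) / p) *
        sInf {r : ℝ | ∃ X : Matrix (Fin n ⊕ Fin n) (Fin n ⊕ Fin n) ℝ, Xᵀ = X ∧
            (∀ x : Fin n ⊕ Fin n → ℝ, 0 ≤ x ⬝ᵥ X *ᵥ x) ∧
            (∀ i j, 0 ≤ X i j) ∧ (∑ i, ∑ j, X i j) = 1 ∧
            r = ∑ i, ∑ j, fromBlocks C (-C) (-C) C i j * X i j}
        ≤ y ⬝ᵥ C *ᵥ y := by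
  simpa only [dnnBound_eq_sInf, Fintype.card_fin] using stmt_16_general C hp1
end
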